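/- arXiv:2004.05781 — 3 statements merged into one kernel-verified Lean document; each statement's English description precedes it below -/
import Mathlib

section
/- Let X_A ⊂ S^ℤ be a topologically mixing subshift of finite type and μ = μ_{(P_n : n ∈ ℤ)} a Markov measure on X_A satisfying the Doeblin condition, and let ν be the homogeneous Markov measure on X_A defined by a stochastic matrix Q (compatible with A and satisfying the Doeblin condition) together with its stationary distribution λ (λQ = λ). A necessary condition for μ to be equivalent to ν is that lim_{|n|→∞} P_n = Q (entrywise). If this holds, then μ is equivalent to ν if and only if Σ_{n≥1} Σ_{s,u,v,t ∈ S} (√(P̂_{−n}(u,s)·P_n(v,t)) − √(Q̂(u,s)·Q(v,t)))² < ∞. -/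
/-!
The two-sided chain `x` is folded into the one-sided chain `k ↦ (x₋ₖ, xₖ)` on `S × S`. Under `μ` its
transition matrices are `T k (u, v) (s, t) = P̂₋ₖ(u, s) Pₖ(v, t)`, and under `ν` they are
`U (u, v) (s, t) = Q̂(u, s) Q(v, t)`, so the series in the theorem is, up to its first term, the sum
of the squared Hellinger distances of the rows of `T k` and `U`. Primitivity and the Doeblin
condition bound all marginals `π n s` away from `0` (`IsMarkovMeasure.exists_dist_pos`), hence the
folded chain is again primitive with transition probabilities bounded below on the admissible pairs.

If `μ ≪ ν`, the Hellinger affinities of the two laws on words of length `k + 1` are bounded below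
(`exists_pos_le_aff`). Each further letter lowers the affinity by half of an average of the squared
Hellinger distances of the rows, and by primitivity every row receives a weight bounded below in
that average; telescoping gives summability (`summable_hel_of_ac`).

Conversely, given summability, compare `μ` with the chain that follows `T` up to time `n` and `U`
afterwards. Its density with respect to `ν` is bounded, and its Hellinger distance to `μ` is at most
a tail of the series. This gives `μ C ≤ B ν C + ε` for all cylinder sets `C` at once
(`exists_real_le_mul_add`), and approximation by cylinders yields `μ ≪ ν` (`ac_of_summable`); the
situation is symmetric in `μ` and `ν`.

Finally, summability alone forces `P n → Q` at both ends (`tendsto_of_summable`): it gives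
`Pₙ → Q` and `P̂₋ₙ → Q̂` directly, and the latter implies `π₋ₙ → λ` by an `ℓ¹` contraction argument
(`tendsto_stationary`), hence `P₋ₙ → Q`.
-/

open MeasureTheory Filter Topology

namespace MarkovSFT

/-- The space of two-sided sequences over `S`. -/
abbrev Seq (S : Type*) := ℤ → S

/-- The shift by `n`: `(T^n x)_k = x_{k+n}`. -/
def shiftZ {S : Type*} (n : ℤ) (x : Seq S) : Seq S := fun k => x (k + n)

/-- The left shift `T`. -/
def shiftMap {S : Type*} : Seq S → Seq S := shiftZ 1

/-- The subshift of finite type determined by the adjacency matrix `A`. -/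
def SFT {S : Type*} (A : S → S → Bool) : Set (Seq S) :=
  {x | ∀ n : ℤ, A (x n) (x (n + 1)) = true}

/-- `A` is primitive: all entries of `A^M` are positive for some `M ≥ 1`
(expressed via the existence of admissible paths of length `M`). -/
def IsPrimitive {S : Type*} (A : S → S → Bool) : Prop :=
  ∃ M : ℕ, 1 ≤ M ∧ ∀ s t : S, ∃ u : ℕ → S,
    u 0 = s ∧ u M = t ∧ ∀ i < M, A (u i) (u (i + 1)) = true

/-- A stochastic matrix over the finite state space `S`. -/
def IsStochastic {S : Type*} [Fintype S] (P : S → S → ℝ) : Prop :=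
  (∀ s t, 0 ≤ P s t) ∧ ∀ s, ∑ t, P s t = 1

/-- The Doeblin condition for the family of transition matrices `P` relative to `A`. -/
def Doeblin {S : Type*} (A : S → S → Bool) (P : ℤ → S → S → ℝ) : Prop :=
  ∃ δ : ℝ, 0 < δ ∧ ∀ (n : ℤ) (s t : S), δ ≤ P n s t ↔ A s t = true

/-- `μ` is the Markov measure on the SFT `X_A` determined by the transition
matrices `(P n)` and coordinate distributions `(π n)`. -/
structure IsMarkovMeasure {S : Type*} [Fintype S] [MeasurableSpace S]
    (μ : Measure (Seq S)) (A : S → S → Bool)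
    (P : ℤ → S → S → ℝ) (π : ℤ → S → ℝ) : Prop where
  isProb : IsProbabilityMeasure μ
  stochastic : ∀ n, IsStochastic (P n)
  compat : ∀ (n : ℤ) (s t : S), A s t = false → P n s t = 0
  dist_nonneg : ∀ (n : ℤ) (s : S), 0 ≤ π n s
  dist_sum : ∀ n : ℤ, ∑ s, π n s = 1
  consistent : ∀ (n : ℤ) (t : S), ∑ s, π n s * P n s t = π (n + 1) t
  supp : μ (SFT A) = 1
  cylinder : ∀ (k : ℤ) (m : ℕ) (w : Fin (m + 1) → S),
    μ {x | ∀ i : Fin (m + 1), x (k + 1 + ((i : ℕ) : ℤ)) = w i}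
      = ENNReal.ofReal (π (k + 1) (w 0) *
          ∏ i : Fin m, P (k + 1 + ((i : ℕ) : ℤ)) (w i.castSucc) (w i.succ))

/-- The left shift is nonsingular with respect to `μ`:
`μ` and `μ ∘ T⁻¹` are mutually absolutely continuous. -/
def ShiftNonsingular {S : Type*} [Fintype S] [MeasurableSpace S]
    (μ : Measure (Seq S)) : Prop :=
  Measure.map (shiftMap (S := S)) μ ≪ μ ∧ μ ≪ Measure.map (shiftMap (S := S)) μ

/-- The left shift is conservative with respect to `μ`. -/
def ShiftConservative {S : Type*} [Fintype S] [MeasurableSpace S]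
    (μ : Measure (Seq S)) : Prop :=
  ∀ E : Set (Seq S), MeasurableSet E → 0 < μ E →
    ∃ n : ℕ, 1 ≤ n ∧ 0 < μ (E ∩ (shiftMap (S := S))^[n] ⁻¹' E)

/-- An element of the pseudo full-group `[[T]]` of the shift, together with
(a version of) the logarithm of its Radon–Nikodym derivative `log dμ∘V/dμ`. -/
structure PFG {S : Type*} [Fintype S] [MeasurableSpace S] (μ : Measure (Seq S)) where
  dom : Set (Seq S)
  toFun : Seq S → Seq S
  logDeriv : Seq S → ℝ
  meas_dom : MeasurableSet dom
  meas_toFun : Measurable toFun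
  meas_logDeriv : Measurable logDeriv
  injOn : Set.InjOn toFun dom
  orbit : ∀ᵐ x ∂μ.restrict dom, ∃ n : ℤ, toFun x = shiftZ n x
  deriv_spec : ∀ E : Set (Seq S), E ⊆ dom → MeasurableSet E →
    μ (toFun '' E) = ∫⁻ x in E, ENNReal.ofReal (Real.exp (logDeriv x)) ∂μ

/-- `r` is an essential value of (the Radon–Nikodym cocycle of) the shift on `(X, μ)`. -/
def IsEssentialValue {S : Type*} [Fintype S] [MeasurableSpace S]
    (μ : Measure (Seq S)) (r : ℝ) : Prop :=
  ∀ E : Set (Seq S), MeasurableSet E → 0 < μ E → ∀ ε : ℝ, 0 < ε →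
    ∃ g : PFG μ,
      0 < μ (E ∩ g.dom ∩ g.toFun ⁻¹' E ∩ {x | |g.logDeriv x - r| < ε})

end MarkovSFT
namespace MarkovSFT

/-- The reverse transition matrices `P̂_n(s,t) = π_{n-1}(t) P_{n-1}(t,s) / π_n(s)`. -/
noncomputable def reverseP {S : Type*} (P : ℤ → S → S → ℝ) (π : ℤ → S → ℝ)
    (n : ℤ) (s t : S) : ℝ :=
  if 0 < π n s then π (n - 1) t * P (n - 1) t s / π n s else 0

/-- The reverse of a homogeneous stochastic matrix `Q` with stationary vector `λ`:
`Q̂(s,t) = λ(t) Q(t,s) / λ(s)`. -/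
noncomputable def reverseQ {S : Type*} (Q : S → S → ℝ) (lam : S → ℝ) (s t : S) : ℝ :=
  lam t * Q t s / lam s


/-! ### Words and weights of a one-sided chain -/

/-- Words of length `k + 1` over `E`, built by appending letters on the right. -/
def Wd (E : Type*) : ℕ → Type _
  | 0 => E
  | k + 1 => Wd E k × E

instance Wd.instFintype (E : Type*) [Fintype E] : ∀ k, Fintype (Wd E k)
  | 0 => inferInstanceAs (Fintype E)
  | k + 1 => @instFintypeProd _ _ (Wd.instFintype E k) inferInstance

/-- The last letter of a word. -/
def Wd.last {E : Type*} : ∀ k, Wd E k → E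
  | 0, w => w
  | _ + 1, w => w.2

/-- The weight `p(w₀) T₀(w₀,w₁) ⋯ T_{k-1}(w_{k-1},w_k)` of a word for the chain with initial
vector `p` and transition matrices `T`. -/
def wt {E : Type*} (p : E → ℝ) (T : ℕ → E → E → ℝ) : ∀ k, Wd E k → ℝ
  | 0, w => p w
  | k + 1, w => wt p T k w.1 * T k (Wd.last k w.1) w.2

theorem Wd.sum_succ {E : Type*} [Fintype E] (k : ℕ) (F : Wd E (k + 1) → ℝ) :
    ∑ w, F w = ∑ w : Wd E k, ∑ e : E, F (w, e) :=
  Fintype.sum_prod_type F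

section Chains

variable {E : Type*} [Fintype E]

theorem wt_nonneg {p : E → ℝ} {T : ℕ → E → E → ℝ} (hp : ∀ e, 0 ≤ p e)
    (hT : ∀ k, IsStochastic (T k)) : ∀ k w, 0 ≤ wt p T k w
  | 0, w => hp w
  | k + 1, w => mul_nonneg (wt_nonneg hp hT k w.1) ((hT k).1 _ _)

theorem sum_wt {p : E → ℝ} {T : ℕ → E → E → ℝ} (hp : ∑ e, p e = 1)
    (hT : ∀ k, IsStochastic (T k)) : ∀ k, ∑ w, wt p T k w = 1
  | 0 => hp
  | k + 1 => by
    rw [Wd.sum_succ]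
    simp only [wt, ← Finset.mul_sum, (hT k).2, mul_one]
    exact sum_wt hp hT k

/-! ### Hellinger affinities -/

/-- The squared Hellinger distance of the rows `T_k(v,·)` and `U_k(v,·)`. -/
noncomputable def hel (T U : ℕ → E → E → ℝ) (k : ℕ) (v : E) : ℝ :=
  ∑ e, (√(T k v e) - √(U k v e)) ^ 2

theorem hel_nonneg (T U : ℕ → E → E → ℝ) (k : ℕ) (v : E) : 0 ≤ hel T U k v :=
  Finset.sum_nonneg fun _ _ => sq_nonneg _

theorem sum_sqrt_mul_sqrt {T U : ℕ → E → E → ℝ} (hT : ∀ k, IsStochastic (T k))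
    (hU : ∀ k, IsStochastic (U k)) (k : ℕ) (v : E) :
    ∑ e, √(T k v e) * √(U k v e) = 1 - hel T U k v / 2 := by
  have : hel T U k v = ∑ e, (T k v e + U k v e - 2 * (√(T k v e) * √(U k v e))) := by
    refine Finset.sum_congr rfl fun e _ => ?_
    rw [sub_sq, Real.sq_sqrt ((hT k).1 _ _), Real.sq_sqrt ((hU k).1 _ _)]
    ring
  rw [this, Finset.sum_sub_distrib, Finset.sum_add_distrib, (hT k).2, (hU k).2, ← Finset.mul_sum]
  ring

open Classical in
/-- The part of the Hellinger affinity of the two laws on words of length `k + 1` that is carried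
by the words ending in `v`. -/
noncomputable def affAt (p q : E → ℝ) (T U : ℕ → E → E → ℝ) (k : ℕ) (v : E) : ℝ :=
  ∑ w : Wd E k, if Wd.last k w = v then √(wt p T k w) * √(wt q U k w) else 0

/-- The Hellinger affinity of the two laws on words of length `k + 1`. -/
noncomputable def aff (p q : E → ℝ) (T U : ℕ → E → E → ℝ) (k : ℕ) : ℝ :=
  ∑ w : Wd E k, √(wt p T k w) * √(wt q U k w)

theorem affAt_nonneg (p q : E → ℝ) (T U : ℕ → E → E → ℝ) (k : ℕ) (v : E) :
    0 ≤ affAt p q T U k v :=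
  Finset.sum_nonneg fun _ _ => by split_ifs <;> positivity

theorem sum_affAt_mul (p q : E → ℝ) (T U : ℕ → E → E → ℝ) (k : ℕ) (F : E → ℝ) :
    ∑ v, affAt p q T U k v * F v
      = ∑ w : Wd E k, √(wt p T k w) * √(wt q U k w) * F (Wd.last k w) := by
  classical
  simp only [affAt, Finset.sum_mul]
  rw [Finset.sum_comm]
  refine Finset.sum_congr rfl fun w _ => ?_
  simp [ite_mul]

theorem sum_affAt (p q : E → ℝ) (T U : ℕ → E → E → ℝ) (k : ℕ) :
    ∑ v, affAt p q T U k v = aff p q T U k := by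
  simpa [aff] using sum_affAt_mul p q T U k (fun _ => 1)

theorem affAt_succ {p q : E → ℝ} {T U : ℕ → E → E → ℝ} (hp : ∀ e, 0 ≤ p e) (hq : ∀ e, 0 ≤ q e)
    (hT : ∀ k, IsStochastic (T k)) (hU : ∀ k, IsStochastic (U k)) (k : ℕ) (t : E) :
    affAt p q T U (k + 1) t = ∑ v, affAt p q T U k v * (√(T k v t) * √(U k v t)) := by
  classical
  rw [sum_affAt_mul, affAt, Wd.sum_succ]
  refine Finset.sum_congr rfl fun w _ => ?_
  change (∑ e, if e = t then √(wt p T k w * T k (Wd.last k w) e) *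
    √(wt q U k w * U k (Wd.last k w) e) else 0) = _
  rw [Finset.sum_ite_eq' Finset.univ t, if_pos (Finset.mem_univ t)]
  rw [Real.sqrt_mul (wt_nonneg hp hT k w), Real.sqrt_mul (wt_nonneg hq hU k w)]
  ring

theorem aff_succ {p q : E → ℝ} {T U : ℕ → E → E → ℝ} (hp : ∀ e, 0 ≤ p e) (hq : ∀ e, 0 ≤ q e)
    (hT : ∀ k, IsStochastic (T k)) (hU : ∀ k, IsStochastic (U k)) (k : ℕ) :
    aff p q T U (k + 1)
      = aff p q T U k - (∑ v, affAt p q T U k v * hel T U k v) / 2 := by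
  rw [← sum_affAt, ← sum_affAt]
  simp only [affAt_succ hp hq hT hU]
  rw [Finset.sum_comm, Finset.sum_div, ← Finset.sum_sub_distrib]
  refine Finset.sum_congr rfl fun v _ => ?_
  rw [← Finset.mul_sum, sum_sqrt_mul_sqrt hT hU]
  ring

theorem aff_le_one {p q : E → ℝ} {T U : ℕ → E → E → ℝ} (hp : ∀ e, 0 ≤ p e) (hq : ∀ e, 0 ≤ q e)
    (hp1 : ∑ e, p e = 1) (hq1 : ∑ e, q e = 1)
    (hT : ∀ k, IsStochastic (T k)) (hU : ∀ k, IsStochastic (U k)) (k : ℕ) :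
    aff p q T U k ≤ 1 := by
  have h : aff p q T U k ≤ ∑ w : Wd E k, (wt p T k w + wt q U k w) / 2 := by
    refine Finset.sum_le_sum fun w _ => ?_
    nlinarith [sq_nonneg (√(wt p T k w) - √(wt q U k w)),
      Real.sq_sqrt (wt_nonneg hp hT k w), Real.sq_sqrt (wt_nonneg hq hU k w)]
  rw [← Finset.sum_div, Finset.sum_add_distrib, sum_wt hp1 hT, sum_wt hq1 hU] at h
  linarith

/-- Two chains with the same initial law lose at most half of the total squared Hellinger distance
of their transitions in affinity. -/
theorem one_sub_le_aff {p : E → ℝ} {T U : ℕ → E → E → ℝ} (hp : ∀ e, 0 ≤ p e)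
    (hp1 : ∑ e, p e = 1)
    (hT : ∀ k, IsStochastic (T k)) (hU : ∀ k, IsStochastic (U k)) (k : ℕ) :
    1 - (∑ i ∈ Finset.range k, ∑ v, hel T U i v) / 2 ≤ aff p p T U k := by
  induction k with
  | zero =>
    have : aff p p T U 0 = 1 := by
      rw [← hp1]
      exact Finset.sum_congr rfl fun e _ => Real.mul_self_sqrt (hp e)
    simp [this]
  | succ k ih =>
    rw [aff_succ hp hp hT hU, Finset.sum_range_succ]
    have : ∑ v, affAt p p T U k v * hel T U k v ≤ ∑ v, hel T U k v := by
      refine Finset.sum_le_sum fun v _ => mul_le_of_le_one_left (hel_nonneg ..) ?_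
      refine le_trans ?_ (aff_le_one hp hp hp1 hp1 hT hU k)
      rw [← sum_affAt]
      exact Finset.single_le_sum (f := affAt p p T U k) (fun v _ => affAt_nonneg ..)
        (Finset.mem_univ v)
    linarith

/-! ### Primitivity -/

/-- If mass at `v` passes at least a fraction `δ` to every successor of `v`, and any two states are
joined by a path of length `M`, then after `M` steps every state carries at least the fraction
`δ ^ M / |E|` of the mass: follow a path from a state of maximal mass. -/
theorem spread_mass [Nonempty E] {Adj : E → E → Prop} {M : ℕ}
    (hM : ∀ s t : E, ∃ u : ℕ → E, u 0 = s ∧ u M = t ∧ ∀ i < M, Adj (u i) (u (i + 1)))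
    {δ : ℝ} (hδ : 0 ≤ δ) (β : ℕ → E → ℝ)
    (hβ : ∀ k v t, Adj v t → δ * β k v ≤ β (k + 1) t) (t : E) :
    δ ^ M / Fintype.card E * ∑ v, β 0 v ≤ β M t := by
  obtain ⟨r, hr⟩ := Finite.exists_max (β 0)
  obtain ⟨u, hu0, huM, hu⟩ := hM r t
  have hpath : ∀ j ≤ M, δ ^ j * β 0 r ≤ β j (u j) := by
    intro j hj
    induction j with
    | zero => simp [hu0]
    | succ j ih =>
      refine le_trans ?_ (hβ j _ _ (hu j hj))
      rw [pow_succ', mul_assoc]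
      exact mul_le_mul_of_nonneg_left (ih (by omega)) hδ
  have hsum : ∑ v, β 0 v ≤ Fintype.card E * β 0 r := by
    have := Finset.sum_le_card_nsmul Finset.univ (β 0) (β 0 r) (fun v _ => hr v)
    simpa using this
  have hc : (0 : ℝ) < Fintype.card E := by exact_mod_cast Fintype.card_pos
  calc δ ^ M / Fintype.card E * ∑ v, β 0 v
      ≤ δ ^ M / Fintype.card E * (Fintype.card E * β 0 r) := by gcongr
    _ = δ ^ M * β 0 r := by field_simp
    _ ≤ β M t := huM ▸ hpath M le_rfl

/-! ### Absolute continuity and Hellinger distances for one-sided chains -/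

section OneSided

variable {Ω : Type*} [MeasurableSpace Ω]

/-- `f k` reads off the first `k + 1` letters of a chain with initial law `p` and transition
matrices `T` under `μ`. -/
def IsLaw (μ : Measure Ω) (f : ∀ k, Ω → Wd E k) (p : E → ℝ) (T : ℕ → E → E → ℝ) : Prop :=
  ∀ k w, μ.real (f k ⁻¹' {w}) = wt p T k w

theorem IsLaw.real_preimage {E : Type*} {μ : Measure Ω} [IsProbabilityMeasure μ]
    {f : ∀ k, Ω → Wd E k} {p : E → ℝ} {T : ℕ → E → E → ℝ} (h : IsLaw μ f p T)
    (hf : ∀ k w, MeasurableSet (f k ⁻¹' {w})) (k : ℕ) (C : Finset (Wd E k)) :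
    μ.real (f k ⁻¹' C) = ∑ w ∈ C, wt p T k w := by
  rw [← sum_measureReal_preimage_singleton C (fun w _ => hf k w)]
  exact Finset.sum_congr rfl fun w _ => h k w

/-- The affinities of two laws stay away from `0` if one law is absolutely continuous with respect
to the other. -/
theorem exists_pos_le_aff {μ ν : Measure Ω} [IsProbabilityMeasure μ] [IsProbabilityMeasure ν]
    (hac : μ ≪ ν) {f : ∀ k, Ω → Wd E k} (hf : ∀ k w, MeasurableSet (f k ⁻¹' {w}))
    {p q : E → ℝ} {T U : ℕ → E → E → ℝ} (hp : ∀ e, 0 ≤ p e) (hq : ∀ e, 0 ≤ q e)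
    (hT : ∀ k, IsStochastic (T k)) (hU : ∀ k, IsStochastic (U k))
    (hμ : IsLaw μ f p T) (hν : IsLaw ν f q U) :
    ∃ c, 0 < c ∧ ∀ k, c ≤ aff p q T U k := by
  classical
  obtain ⟨δ, hδ0, hδ⟩ := exists_pos_setLIntegral_lt_of_measure_lt
    (μ := ν) (f := μ.rnDeriv ν) (Measure.lintegral_rnDeriv_lt_top μ ν).ne
    (ε := ENNReal.ofReal (1 / 2)) (by simp)
  have hδ' : ∀ B, ν B < δ → μ.real B < 1 / 2 := by
    intro B hB
    have := hδ B hB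
    rw [Measure.setLIntegral_rnDeriv hac] at this
    exact (ENNReal.lt_ofReal_iff_toReal_lt (measure_ne_top μ B)).1 this
  obtain ⟨η, hη0, hηδ⟩ : ∃ η : ℝ, 0 < η ∧ ENNReal.ofReal η ≤ δ := by
    rcases eq_or_ne δ ⊤ with h | h
    · exact ⟨1, one_pos, h ▸ le_top⟩
    · exact ⟨δ.toReal, ENNReal.toReal_pos hδ0.ne' h, (ENNReal.ofReal_toReal h).le⟩
  refine ⟨min η (1 / 2), by positivity, fun k => ?_⟩
  by_contra! hlt
  obtain ⟨h1, h2⟩ := lt_min_iff.1 hlt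
  -- the set where the `μ`-weight dominates has small `ν`-mass, and its complement small `μ`-mass
  set C : Finset (Wd E k) := {w | wt q U k w ≤ wt p T k w} with hC
  have haff : aff p q T U k = ∑ w ∈ C, √(wt p T k w) * √(wt q U k w)
      + ∑ w ∈ Cᶜ, √(wt p T k w) * √(wt q U k w) := (Finset.sum_add_sum_compl C _).symm
  have hn : ∀ w : Wd E k, 0 ≤ √(wt p T k w) * √(wt q U k w) := fun w => by positivity
  have hνC : ν.real (f k ⁻¹' C) ≤ aff p q T U k := by
    rw [hν.real_preimage hf, haff]
    refine le_add_of_le_of_nonneg (Finset.sum_le_sum fun w hw => ?_)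
      (Finset.sum_nonneg fun w _ => hn w)
    have hw' : wt q U k w ≤ wt p T k w := by simpa [hC] using hw
    calc wt q U k w = √(wt q U k w) * √(wt q U k w) :=
          (Real.mul_self_sqrt (wt_nonneg hq hU k w)).symm
      _ ≤ _ := by gcongr
  have hμC : μ.real (f k ⁻¹' (Cᶜ : Finset _)) ≤ aff p q T U k := by
    rw [hμ.real_preimage hf, haff]
    refine le_add_of_nonneg_of_le (Finset.sum_nonneg fun w _ => hn w)
      (Finset.sum_le_sum fun w hw => ?_)
    have hw' : wt p T k w ≤ wt q U k w := by
      have : wt p T k w < wt q U k w := by simpa [hC] using hw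
      exact this.le
    calc wt p T k w = √(wt p T k w) * √(wt p T k w) :=
          (Real.mul_self_sqrt (wt_nonneg hp hT k w)).symm
      _ ≤ _ := by gcongr
  have hlt1 : μ.real (f k ⁻¹' C) < 1 / 2 := by
    refine hδ' _ (lt_of_lt_of_le ?_ hηδ)
    exact (ENNReal.lt_ofReal_iff_toReal_lt (measure_ne_top ν _)).2 (hνC.trans_lt h1)
  have hms : MeasurableSet (f k ⁻¹' (C : Set (Wd E k))) := by
    have : f k ⁻¹' (C : Set (Wd E k)) = ⋃ w ∈ C, f k ⁻¹' {w} := by ext; simp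
    rw [this]
    exact Finset.measurableSet_biUnion _ fun w _ => hf k w
  have htot := probReal_add_probReal_compl (μ := μ) hms
  rw [← Set.preimage_compl, ← Finset.coe_compl] at htot
  linarith

/-- Absolute continuity forces the squared Hellinger distances of the transition matrices to be
summable. By primitivity the affinity carried by each state is comparable with the whole affinity,
which is bounded below; hence each step costs a fixed proportion of the Hellinger distance. -/
theorem summable_hel_of_ac [Nonempty E]
    {μ ν : Measure Ω} [IsProbabilityMeasure μ] [IsProbabilityMeasure ν]
    (hac : μ ≪ ν) {f : ∀ k, Ω → Wd E k} (hf : ∀ k w, MeasurableSet (f k ⁻¹' {w}))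
    {p q : E → ℝ} {T U : ℕ → E → E → ℝ} (hp : ∀ e, 0 ≤ p e) (hq : ∀ e, 0 ≤ q e)
    (hT : ∀ k, IsStochastic (T k)) (hU : ∀ k, IsStochastic (U k))
    (hμ : IsLaw μ f p T) (hν : IsLaw ν f q U)
    {Adj : E → E → Prop} {M : ℕ}
    (hM : ∀ s t : E, ∃ u : ℕ → E, u 0 = s ∧ u M = t ∧ ∀ i < M, Adj (u i) (u (i + 1)))
    {δ : ℝ} (hδ : 0 < δ) (hTδ : ∀ k s t, Adj s t → δ ≤ T k s t)
    (hUδ : ∀ k s t, Adj s t → δ ≤ U k s t) :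
    Summable fun k => ∑ v, hel T U k v := by
  obtain ⟨c, hc, hcaff⟩ := exists_pos_le_aff hac hf hp hq hT hU hμ hν
  have hanti : ∀ k, aff p q T U (k + 1) ≤ aff p q T U k := by
    intro k
    rw [aff_succ hp hq hT hU]
    have : 0 ≤ ∑ v, affAt p q T U k v * hel T U k v :=
      Finset.sum_nonneg fun v _ => mul_nonneg (affAt_nonneg ..) (hel_nonneg ..)
    linarith
  have hstep : ∀ k v t, Adj v t → δ * affAt p q T U k v ≤ affAt p q T U (k + 1) t := by
    intro k v t hvt
    rw [affAt_succ hp hq hT hU]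
    refine le_trans ?_ (Finset.single_le_sum
      (f := fun v => affAt p q T U k v * (√(T k v t) * √(U k v t)))
      (fun v _ => mul_nonneg (affAt_nonneg ..) (by positivity)) (Finset.mem_univ v))
    rw [mul_comm]
    refine mul_le_mul_of_nonneg_left ?_ (affAt_nonneg ..)
    calc δ = √δ * √δ := (Real.mul_self_sqrt hδ.le).symm
      _ ≤ _ := mul_le_mul (Real.sqrt_le_sqrt (hTδ k v t hvt)) (Real.sqrt_le_sqrt (hUδ k v t hvt))
        (by positivity) (by positivity)
  set κ : ℝ := δ ^ M / Fintype.card E * c with hκ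
  have hκ0 : 0 < κ := by
    have hcard : (0 : ℝ) < Fintype.card E := by exact_mod_cast Fintype.card_pos
    positivity
  have hlow : ∀ k v, κ ≤ affAt p q T U (k + M) v := by
    intro k v
    have := spread_mass hM hδ.le (fun j => affAt p q T U (k + j))
      (fun j v t h => hstep (k + j) v t h) v
    refine le_trans ?_ this
    simp only [add_zero, sum_affAt]
    exact mul_le_mul_of_nonneg_left (hcaff k) (by positivity)
  rw [← summable_nat_add_iff M]
  refine summable_of_sum_range_le (c := 2 / κ * aff p q T U M)
    (fun k => Finset.sum_nonneg fun v _ => hel_nonneg ..) fun n => ?_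
  have htel : ∀ n, κ / 2 * ∑ i ∈ Finset.range n, ∑ v, hel T U (i + M) v
      ≤ aff p q T U M - aff p q T U (n + M) := by
    intro n
    induction n with
    | zero => simp
    | succ n ih =>
      rw [Finset.sum_range_succ, mul_add, show n + 1 + M = (n + M) + 1 by ring,
        aff_succ hp hq hT hU]
      have : κ * ∑ v, hel T U (n + M) v ≤ ∑ v, affAt p q T U (n + M) v * hel T U (n + M) v := by
        rw [Finset.mul_sum]
        exact Finset.sum_le_sum fun v _ =>
          mul_le_mul_of_nonneg_right (hlow n v) (hel_nonneg ..)
      linarith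
  have h1 := htel n
  have h2 := hcaff (n + M)
  have h3 : κ / 2 * ∑ i ∈ Finset.range n, ∑ v, hel T U (i + M) v ≤ aff p q T U M := by linarith
  calc ∑ i ∈ Finset.range n, ∑ v, hel T U (i + M) v
      = 2 / κ * (κ / 2 * ∑ i ∈ Finset.range n, ∑ v, hel T U (i + M) v) := by field_simp
    _ ≤ _ := by gcongr

/-- If the transition matrices `T` are dominated by `D • U` before time `n` and by `U` afterwards,
the ratio of the weights is bounded. -/
theorem wt_le_mul_wt {p q : E → ℝ} {T U : ℕ → E → E → ℝ} (hp : ∀ e, 0 ≤ p e) (hq : ∀ e, 0 ≤ q e)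
    (hT : ∀ k, IsStochastic (T k)) (hU : ∀ k, IsStochastic (U k))
    {K D : ℝ} (hK : 0 ≤ K) (hD : 1 ≤ D) {n : ℕ} (hpq : ∀ e, p e ≤ K * q e)
    (hTU : ∀ k s t, T k s t ≤ D * U k s t) (hTU' : ∀ k, n ≤ k → T k = U k) :
    ∀ k w, wt p T k w ≤ K * D ^ min k n * wt q U k w
  | 0, w => by simpa [wt] using hpq w
  | k + 1, w => by
    have ih := wt_le_mul_wt hp hq hT hU hK hD hpq hTU hTU' k w.1
    have hq' := wt_nonneg hq hU k w.1
    simp only [wt]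
    rcases lt_or_ge k n with h | h
    · rw [min_eq_left h.le] at ih
      rw [min_eq_left (show k + 1 ≤ n from h), pow_succ]
      calc wt p T k w.1 * T k (Wd.last k w.1) w.2
          ≤ (K * D ^ k * wt q U k w.1) * (D * U k (Wd.last k w.1) w.2) :=
            mul_le_mul ih (hTU ..) ((hT k).1 _ _) (by positivity)
        _ = _ := by ring
    · rw [min_eq_right h] at ih
      rw [min_eq_right (show n ≤ k + 1 by omega), hTU' k h]
      calc _ ≤ (K * D ^ n * wt q U k w.1) * U k (Wd.last k w.1) w.2 :=
            mul_le_mul_of_nonneg_right ih ((hU k).1 _ _)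
        _ = _ := by ring

/-- A quantitative absolute continuity on cylinder sets, uniform in the length of the cylinders.
The chain that moves according to `T` before a late time `n` and according to `U` afterwards has a
bounded density with respect to the second chain, and its Hellinger distance to the first is
controlled by the tail of the sum of the distances `hel T U`. -/
theorem exists_real_le_mul_add
    {μ ν : Measure Ω} [IsProbabilityMeasure μ] [IsProbabilityMeasure ν]
    {f : ∀ k, Ω → Wd E k} (hf : ∀ k w, MeasurableSet (f k ⁻¹' {w}))
    {p q : E → ℝ} {T U : ℕ → E → E → ℝ} (hp : ∀ e, 0 ≤ p e) (hq : ∀ e, 0 ≤ q e)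
    (hp1 : ∑ e, p e = 1)
    (hT : ∀ k, IsStochastic (T k)) (hU : ∀ k, IsStochastic (U k))
    (hμ : IsLaw μ f p T) (hν : IsLaw ν f q U)
    {K D : ℝ} (hK : 0 ≤ K) (hD : 1 ≤ D) (hpq : ∀ e, p e ≤ K * q e)
    (hTU : ∀ k s t, T k s t ≤ D * U k s t)
    (hsum : Summable fun k => ∑ v, hel T U k v) {ε : ℝ} (hε : 0 < ε) :
    ∃ B, 0 ≤ B ∧ ∀ k (C : Finset (Wd E k)),
      μ.real (f k ⁻¹' C) ≤ B * ν.real (f k ⁻¹' C) + ε := by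
  obtain ⟨n, hn⟩ := ((tendsto_sum_nat_add fun k => ∑ v, hel T U k v).eventually
    (gt_mem_nhds (show 0 < ε / 2 by positivity))).exists
  set R : ℕ → E → E → ℝ := fun k => if k < n then T k else U k with hR
  have hRs : ∀ k, IsStochastic (R k) := fun k => by simp only [hR]; split_ifs <;> simp [hT, hU]
  have hRle : ∀ k s t, R k s t ≤ D * U k s t := by
    intro k s t
    simp only [hR]
    split_ifs
    · exact hTU k s t
    · exact le_mul_of_one_le_left ((hU k).1 _ _) hD
  have hRn : ∀ k, n ≤ k → R k = U k := fun k hk => by simp [hR, not_lt.2 hk]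
  have hhel : ∀ k, ∑ i ∈ Finset.range k, ∑ v, hel T R i v ≤ ε / 2 := by
    intro k
    have hs' : Summable fun i => ∑ v, hel T U (i + n) v :=
      (summable_nat_add_iff (f := fun i => ∑ v, hel T U i v) n).2 hsum
    have hnn : ∀ i, 0 ≤ ∑ v, hel T U i v := fun i => Finset.sum_nonneg fun v _ => hel_nonneg ..
    have hnnR : ∀ i, 0 ≤ ∑ v, hel T R i v := fun i => Finset.sum_nonneg fun v _ => hel_nonneg ..
    calc ∑ i ∈ Finset.range k, ∑ v, hel T R i v
        ≤ ∑ i ∈ Finset.range (n + k), ∑ v, hel T R i v :=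
          Finset.sum_le_sum_of_subset_of_nonneg
            (Finset.range_mono (by omega)) fun i _ _ => hnnR i
      _ = ∑ i ∈ Finset.range k, ∑ v, hel T U (i + n) v := by
          rw [Finset.sum_range_add, Finset.sum_eq_zero, zero_add]
          · refine Finset.sum_congr rfl fun i _ => ?_
            rw [add_comm n i]
            simp [hel, hRn (i + n) (by omega)]
          · intro i hi
            simp [hel, hR, Finset.mem_range.1 hi]
      _ ≤ ∑' i, ∑ v, hel T U (i + n) v := hs'.sum_le_tsum _ fun i _ => hnn _
      _ ≤ ε / 2 := hn.le
  refine ⟨2 * (K * D ^ n), by positivity, fun k C => ?_⟩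
  rw [hμ.real_preimage hf, hν.real_preimage hf]
  have hratio : ∀ w, wt p R k w ≤ K * D ^ n * wt q U k w := fun w =>
    (wt_le_mul_wt hp hq hRs hU hK hD hpq hRle hRn k w).trans <|
      mul_le_mul_of_nonneg_right (mul_le_mul_of_nonneg_left
        (pow_le_pow_right₀ hD (min_le_right _ _)) hK) (wt_nonneg hq hU k w)
  have haff := one_sub_le_aff hp hp1 hT hRs k
  have hdist : ∑ w, (√(wt p T k w) - √(wt p R k w)) ^ 2 ≤ ε / 2 := by
    have : ∑ w, (√(wt p T k w) - √(wt p R k w)) ^ 2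
        = ∑ w, (wt p T k w + wt p R k w - 2 * (√(wt p T k w) * √(wt p R k w))) := by
      refine Finset.sum_congr rfl fun w _ => ?_
      rw [sub_sq, Real.sq_sqrt (wt_nonneg hp hT k w), Real.sq_sqrt (wt_nonneg hp hRs k w)]
      ring
    rw [this, Finset.sum_sub_distrib, Finset.sum_add_distrib, sum_wt hp1 hT, sum_wt hp1 hRs,
      ← Finset.mul_sum]
    have := hhel k
    simp only [aff] at haff
    linarith
  calc ∑ w ∈ C, wt p T k w
      ≤ ∑ w ∈ C, (2 * (K * D ^ n) * wt q U k w + 2 * (√(wt p T k w) - √(wt p R k w)) ^ 2) := by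
        refine Finset.sum_le_sum fun w _ => ?_
        -- `a² ≤ 2 b² + 2 (a - b)²` with `a`, `b` the square roots of the two weights
        have h1 := Real.sq_sqrt (wt_nonneg hp hT k w)
        have h2 := Real.sq_sqrt (wt_nonneg hp hRs k w)
        nlinarith [hratio w, sq_nonneg (√(wt p T k w) - 2 * √(wt p R k w))]
    _ = 2 * (K * D ^ n) * ∑ w ∈ C, wt q U k w
        + 2 * ∑ w ∈ C, (√(wt p T k w) - √(wt p R k w)) ^ 2 := by
        rw [Finset.sum_add_distrib, Finset.mul_sum, Finset.mul_sum]
    _ ≤ 2 * (K * D ^ n) * ∑ w ∈ C, wt q U k w + 2 * (ε / 2) := by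
        gcongr
        exact (Finset.sum_le_univ_sum_of_nonneg fun w => sq_nonneg _).trans hdist
    _ = _ := by ring

end OneSided

/-! ### Asymptotically homogeneous chains -/

theorem tendsto_zero_of_contracting {D η : ℕ → ℝ} {ρ : ℝ} {M : ℕ} (hD : ∀ n, 0 ≤ D n)
    (hb : ∃ b, ∀ n, D n ≤ b) (hρ0 : 0 ≤ ρ) (hρ : ρ < 1) (hη : Tendsto η atTop (𝓝 0))
    (h : ∀ n, D (n + M) ≤ ρ * D n + η n) : Tendsto D atTop (𝓝 0) := by
  -- `L` is the upper limit of `D`, and the recursion gives `L ≤ ρ * L`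
  set V : Set ℝ := {x | ∀ᶠ n in atTop, D n ≤ x} with hV
  have hVne : V.Nonempty := hb.imp fun b hb => Eventually.of_forall hb
  have hV0 : ∀ x ∈ V, 0 ≤ x := fun x hx => by
    obtain ⟨n, hn⟩ := Eventually.exists hx
    exact (hD n).trans hn
  have hVbdd : BddBelow V := ⟨0, hV0⟩
  have hL0 : 0 ≤ sInf V := le_csInf hVne hV0
  have hstep : ∀ x ∈ V, ∀ ε > 0, ρ * x + ε ∈ V := by
    intro x hx ε hε
    have h1 : ∀ᶠ n in atTop, D (n + M) ≤ ρ * x + ε := by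
      filter_upwards [hx, hη.eventually (gt_mem_nhds hε)] with n hn hn'
      have := mul_le_mul_of_nonneg_left hn hρ0
      linarith [h n]
    obtain ⟨N, hN⟩ := eventually_atTop.1 h1
    refine eventually_atTop.2 ⟨N + M, fun n hn => ?_⟩
    have := hN (n - M) (by omega)
    rwa [Nat.sub_add_cancel (by omega)] at this
  have hL : sInf V = 0 := by
    by_contra hne
    have hpos : 0 < sInf V := lt_of_le_of_ne hL0 (Ne.symm hne)
    set L := sInf V with hLdef
    have hg : 0 < (1 - ρ) * L := mul_pos (by linarith) hpos
    obtain ⟨x, hx, hxL⟩ := exists_lt_of_csInf_lt hVne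
      (show sInf V < L + (1 - ρ) * L / 4 by rw [← hLdef]; linarith)
    have := csInf_le hVbdd (hstep x hx ((1 - ρ) * L / 4) (by positivity))
    rw [← hLdef] at this
    nlinarith
  rw [Metric.tendsto_atTop]
  intro ε hε
  obtain ⟨x, hx, hxε⟩ := exists_lt_of_csInf_lt hVne (show sInf V < ε by rw [hL]; exact hε)
  obtain ⟨N, hN⟩ := eventually_atTop.1 hx
  refine ⟨N, fun n hn => ?_⟩
  rw [Real.dist_eq, sub_zero, abs_of_nonneg (hD n)]
  exact (hN n hn).trans_lt hxε

open Classical in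
/-- The `j`-step transition probabilities of the matrix `B`. -/
noncomputable def stepPow (B : E → E → ℝ) : ℕ → E → E → ℝ
  | 0, u, s => if u = s then 1 else 0
  | j + 1, u, s => ∑ r, stepPow B j u r * B r s

theorem stepPow_nonneg {B : E → E → ℝ} (hB : IsStochastic B) : ∀ j u s, 0 ≤ stepPow B j u s
  | 0, u, s => by simp only [stepPow]; split_ifs <;> norm_num
  | j + 1, u, s => Finset.sum_nonneg fun r _ => mul_nonneg (stepPow_nonneg hB j u r) (hB.1 r s)

theorem sum_stepPow {B : E → E → ℝ} (hB : IsStochastic B) : ∀ j u, ∑ s, stepPow B j u s = 1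
  | 0, u => by
    simp only [stepPow]
    rw [Finset.sum_eq_single u] <;> simp +contextual [eq_comm]
  | j + 1, u => by
    simp only [stepPow]
    rw [Finset.sum_comm]
    simp only [← Finset.mul_sum, hB.2, mul_one]
    exact sum_stepPow hB j u

/-- A chain whose transition matrices converge to a primitive stochastic matrix has marginals
converging to its stationary law: the `M`-step matrix contracts signed vectors of total mass `0` in
the `ℓ¹` norm. -/
theorem tendsto_stationary [Nonempty E] {B : E → E → ℝ} (hB : IsStochastic B) {lam : E → ℝ}
    (hlam1 : ∑ s, lam s = 1) (hlamB : ∀ s, ∑ u, lam u * B u s = lam s)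
    {Adj : E → E → Prop} {M : ℕ}
    (hM : ∀ s t : E, ∃ u : ℕ → E, u 0 = s ∧ u M = t ∧ ∀ i < M, Adj (u i) (u (i + 1)))
    {δ : ℝ} (hδ : 0 < δ) (hBδ : ∀ s t, Adj s t → δ ≤ B s t)
    {a : ℕ → E → ℝ} (ha : ∀ n s, 0 ≤ a n s) (ha1 : ∀ n, ∑ s, a n s = 1)
    {G : ℕ → E → E → ℝ} (hG : ∀ u s, Tendsto (fun n => G n u s) atTop (𝓝 (B u s)))
    (haG : ∀ n s, ∑ u, a n u * G n u s = a (n + 1) s) (s : E) :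
    Tendsto (fun n => a n s) atTop (𝓝 (lam s)) := by
  classical
  have ha_le : ∀ n s, a n s ≤ 1 := fun n s => by
    rw [← ha1 n]
    exact Finset.single_le_sum (fun s _ => ha n s) (Finset.mem_univ s)
  set d : ℕ → E → ℝ := fun n s => a n s - lam s with hd
  have hd0 : ∀ n, ∑ s, d n s = 0 := fun n => by simp [hd, ha1, hlam1]
  have herr1 : ∀ s, Tendsto (fun n => d (n + 1) s - ∑ u, d n u * B u s) atTop (𝓝 0) := by
    intro s
    have heq : ∀ n, d (n + 1) s - ∑ u, d n u * B u s = ∑ u, a n u * (G n u s - B u s) := by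
      intro n
      simp only [hd, sub_mul, mul_sub, Finset.sum_sub_distrib, haG, hlamB]
      ring
    simp only [heq]
    rw [show (0 : ℝ) = ∑ _u : E, 0 by simp]
    refine tendsto_finsetSum _ fun u _ => ?_
    have h0 : Tendsto (fun n => G n u s - B u s) atTop (𝓝 0) := by
      simpa using (hG u s).sub_const (B u s)
    refine squeeze_zero_norm (fun n => ?_) (by simpa using h0.norm)
    rw [norm_mul]
    refine mul_le_of_le_one_left (norm_nonneg _) ?_
    rw [Real.norm_of_nonneg (ha n u)]
    exact ha_le n u
  have herr : ∀ j s, Tendsto (fun n => d (n + j) s - ∑ u, d n u * stepPow B j u s) atTop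
      (𝓝 0) := by
    intro j
    induction j with
    | zero => intro s; simp [stepPow]
    | succ j ih =>
      intro s
      have heq : ∀ n, d (n + (j + 1)) s - ∑ u, d n u * stepPow B (j + 1) u s
          = (d (n + j + 1) s - ∑ r, d (n + j) r * B r s)
            + ∑ r, (d (n + j) r - ∑ u, d n u * stepPow B j u r) * B r s := by
        intro n
        simp only [sub_mul, Finset.sum_sub_distrib, stepPow, Finset.mul_sum, Finset.sum_mul]
        rw [Finset.sum_comm (f := fun r u => d n u * stepPow B j u r * B r s)]
        simp only [mul_assoc, add_assoc]
        ring
      simp only [heq]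
      have h1 := (tendsto_add_atTop_iff_nat j).2 (herr1 s)
      have h2 : Tendsto (fun n => ∑ r, (d (n + j) r - ∑ u, d n u * stepPow B j u r) * B r s)
          atTop (𝓝 (∑ r, 0 * B r s)) :=
        tendsto_finsetSum _ fun r _ => (ih r).mul_const _
      simpa using h1.add h2
  set c : ℝ := δ ^ M / Fintype.card E with hc
  have hcard : (0 : ℝ) < Fintype.card E := by exact_mod_cast Fintype.card_pos
  have hc0 : 0 < c := by positivity
  have hlow : ∀ u s, c ≤ stepPow B M u s := by
    intro u s
    have := spread_mass hM hδ.le (fun j => stepPow B j u) (fun j v t hvt => ?_) s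
    · rwa [sum_stepPow hB, mul_one] at this
    · rw [mul_comm]
      calc stepPow B j u v * δ ≤ stepPow B j u v * B v t :=
            mul_le_mul_of_nonneg_left (hBδ v t hvt) (stepPow_nonneg hB j u v)
        _ ≤ _ := Finset.single_le_sum (f := fun r => stepPow B j u r * B r t)
            (fun r _ => mul_nonneg (stepPow_nonneg hB j u r) (hB.1 r t)) (Finset.mem_univ v)
  set ρ : ℝ := 1 - Fintype.card E * c with hρ
  have hρsum : ∀ u, ∑ s, (stepPow B M u s - c) = ρ := by
    intro u
    rw [Finset.sum_sub_distrib, sum_stepPow hB]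
    simp [hρ]
  have hρ0 : 0 ≤ ρ := by
    rw [← hρsum (Classical.arbitrary E)]
    exact Finset.sum_nonneg fun s _ => sub_nonneg.2 (hlow _ s)
  have hρ1 : ρ < 1 := by
    have := mul_pos hcard hc0
    linarith
  have hcontr : ∀ n, ∑ s, |∑ u, d n u * stepPow B M u s| ≤ ρ * ∑ s, |d n s| := by
    intro n
    calc ∑ s, |∑ u, d n u * stepPow B M u s|
        = ∑ s, |∑ u, d n u * (stepPow B M u s - c)| := by
          refine Finset.sum_congr rfl fun s _ => ?_
          simp only [mul_sub, Finset.sum_sub_distrib, ← Finset.sum_mul, hd0, zero_mul, sub_zero]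
      _ ≤ ∑ s, ∑ u, |d n u| * (stepPow B M u s - c) := by
          refine Finset.sum_le_sum fun s _ => (Finset.abs_sum_le_sum_abs _ _).trans ?_
          refine Finset.sum_le_sum fun u _ => ?_
          rw [abs_mul, abs_of_nonneg (sub_nonneg.2 (hlow u s))]
      _ = ρ * ∑ s, |d n s| := by
          rw [Finset.sum_comm]
          simp only [← Finset.mul_sum, hρsum]
          rw [← Finset.sum_mul, mul_comm]
  have hDtend : Tendsto (fun n => ∑ s, |d n s|) atTop (𝓝 0) := by
    refine tendsto_zero_of_contracting (ρ := ρ) (M := M)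
      (η := fun n => ∑ s, |d (n + M) s - ∑ u, d n u * stepPow B M u s|)
      (fun n => Finset.sum_nonneg fun s _ => abs_nonneg _)
      ⟨∑ s, (1 + |lam s|), fun n => Finset.sum_le_sum fun s _ => ?_⟩ hρ0 hρ1 ?_ fun n => ?_
    · refine (abs_sub _ _).trans ?_
      rw [abs_of_nonneg (ha n s)]
      linarith [ha_le n s]
    · have := tendsto_finsetSum (Finset.univ : Finset E) fun s _ => (herr M s).abs
      simpa using this
    · refine le_trans ?_ (add_le_add_left (hcontr n) _)
      rw [← Finset.sum_add_distrib]
      refine Finset.sum_le_sum fun s _ => ?_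
      have := abs_add_le (∑ u, d n u * stepPow B M u s)
        (d (n + M) s - ∑ u, d n u * stepPow B M u s)
      rwa [add_sub_cancel] at this
  have hds : Tendsto (fun n => d n s) atTop (𝓝 0) := by
    refine squeeze_zero_norm (fun n => ?_) hDtend
    exact Finset.single_le_sum (f := fun s => |d n s|) (fun s _ => abs_nonneg _)
      (Finset.mem_univ s)
  simpa [hd] using hds.add_const (lam s)

end Chains

/-! ### Folding the two-sided chain -/

section Folding

variable {S : Type*}

/-- Transition matrices of the one-sided chain `k ↦ (x₋ₖ, xₖ)` on pairs. -/
noncomputable def pairT (P : ℤ → S → S → ℝ) (π : ℤ → S → ℝ) (k : ℕ) (e e' : S × S) : ℝ :=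
  reverseP P π (-(k : ℤ)) e.1 e'.1 * P k e.2 e'.2

open Classical in
/-- The law of `(x₀, x₀)`, which is the initial law of the chain of pairs. -/
noncomputable def pairInit (π : ℤ → S → ℝ) (e : S × S) : ℝ :=
  if e.1 = e.2 then π 0 e.1 else 0

/-- Admissible transitions of the chain of pairs. -/
def pairAdj (A : S → S → Bool) (e e' : S × S) : Prop :=
  A e'.1 e.1 = true ∧ A e.2 e'.2 = true

/-- The word `(x₀,x₀)(x₋₁,x₁)⋯(x₋ₖ,xₖ)` of pairs read off a two-sided sequence. -/
def readPairs : ∀ k : ℕ, Seq S → Wd (S × S) k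
  | 0, x => (x 0, x 0)
  | k + 1, x => (readPairs k x, (x (-((k : ℤ) + 1)), x ((k : ℤ) + 1)))

theorem last_readPairs : ∀ (k : ℕ) (x : Seq S), Wd.last k (readPairs k x) = (x (-(k : ℤ)), x k)
  | 0, x => by simp [Wd.last, readPairs]
  | k + 1, x => by simp [Wd.last, readPairs]

theorem readPairs_eq_iff (k : ℕ) (x y : Seq S) :
    readPairs k x = readPairs k y ↔ ∀ i : ℤ, -(k : ℤ) ≤ i → i ≤ k → x i = y i := by
  induction k with
  | zero =>
    have : readPairs 0 x = readPairs 0 y ↔ x 0 = y 0 :=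
      ⟨fun h => congrArg Prod.fst h, fun h => congrArg (fun s => (s, s)) h⟩
    rw [this]
    refine ⟨fun h i h1 h2 => ?_, fun h => h 0 (by simp) (by simp)⟩
    obtain rfl : i = 0 := by simp at h1 h2; omega
    exact h
  | succ k ih =>
    have : readPairs (k + 1) x = readPairs (k + 1) y ↔ readPairs k x = readPairs k y ∧
        x (-((k : ℤ) + 1)) = y (-((k : ℤ) + 1)) ∧ x ((k : ℤ) + 1) = y ((k : ℤ) + 1) := by
      change (_, _) = (_, _) ↔ _
      rw [Prod.mk.injEq, Prod.mk.injEq]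
    rw [this, ih]
    constructor
    · rintro ⟨h1, h2, h3⟩ i hi hi'
      push_cast at hi hi'
      by_cases ha : i = -((k : ℤ) + 1)
      · exact ha ▸ h2
      · by_cases hb : i = (k : ℤ) + 1
        · exact hb ▸ h3
        · exact h1 i (by omega) (by omega)
    · intro h
      refine ⟨fun i h1 h2 => h i (by push_cast; omega) (by push_cast; omega),
        h _ (by push_cast; omega) (by push_cast; omega),
        h _ (by push_cast; omega) (by push_cast; omega)⟩

/-- Primitivity passes to pairs: the first coordinate follows a path of `A` backwards. -/
theorem pair_path {A : S → S → Bool} {M : ℕ}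
    (hM : ∀ s t : S, ∃ u : ℕ → S, u 0 = s ∧ u M = t ∧ ∀ i < M, A (u i) (u (i + 1)) = true)
    (e e' : S × S) :
    ∃ u : ℕ → S × S, u 0 = e ∧ u M = e' ∧ ∀ i < M, pairAdj A (u i) (u (i + 1)) := by
  obtain ⟨a, ha0, haM, ha⟩ := hM e'.1 e.1
  obtain ⟨b, hb0, hbM, hb⟩ := hM e.2 e'.2
  refine ⟨fun i => (a (M - i), b i), by simp [haM, hb0], by simp [ha0, hbM],
    fun i hi => ⟨?_, hb i hi⟩⟩
  have := ha (M - (i + 1)) (by omega)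
  rwa [show M - (i + 1) + 1 = M - i by omega] at this

variable {P : ℤ → S → S → ℝ} {π : ℤ → S → ℝ}

theorem reverseP_of_pos (hπ : ∀ n s, 0 < π n s) (n : ℤ) (s t : S) :
    reverseP P π n s t = π (n - 1) t * P (n - 1) t s / π n s :=
  if_pos (hπ n s)

/-- The weight of the word read on the window `[-k, k]`, in terms of the forward transitions. -/
theorem wt_readPairs (hπ : ∀ n s, 0 < π n s) (k : ℕ) (x : Seq S) :
    wt (pairInit π) (pairT P π) k (readPairs k x) = π (-(k : ℤ)) (x (-(k : ℤ))) *
      ∏ i ∈ Finset.range (2 * k), P (-(k : ℤ) + i) (x (-(k : ℤ) + i)) (x (-(k : ℤ) + i + 1)) := by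
  set g : ℤ → ℝ := fun j => P j (x j) (x (j + 1)) with hg
  change _ = _ * ∏ i ∈ Finset.range (2 * k), g (-(k : ℤ) + i)
  induction k with
  | zero => simp [wt, readPairs, pairInit]
  | succ k ih =>
    change wt (pairInit π) (pairT P π) k (readPairs k x) *
      pairT P π k (Wd.last k (readPairs k x)) (x (-((k : ℤ) + 1)), x ((k : ℤ) + 1)) = _
    rw [ih, last_readPairs, pairT, reverseP_of_pos hπ, show 2 * (k + 1) = 2 * k + 1 + 1 by ring,
      Finset.prod_range_succ, Finset.prod_range_succ']
    have h1 : ∀ i : ℕ, -((k + 1 : ℕ) : ℤ) + ((i + 1 : ℕ) : ℤ) = -(k : ℤ) + i := fun i => by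
      push_cast; ring
    have h2 : -(k : ℤ) + ((2 * k : ℕ) : ℤ) = k := by push_cast; ring
    have h3 : -((k + 1 : ℕ) : ℤ) + ((0 : ℕ) : ℤ) = -(k : ℤ) - 1 := by push_cast; ring
    have h4 : -((k : ℤ) + 1) = -(k : ℤ) - 1 := by ring
    have h5 : -((k + 1 : ℕ) : ℤ) = -(k : ℤ) - 1 := by push_cast; ring
    simp only [h1, h2, h3]
    simp only [h4, h5]
    simp only [hg, sub_add_cancel]
    have := (hπ (-(k : ℤ)) (x (-(k : ℤ)))).ne'
    field_simp

/-- Only words starting on the diagonal are read off sequences; the others have weight `0`. -/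
theorem wt_eq_zero_or_exists (π : ℤ → S → ℝ) (P : ℤ → S → S → ℝ) (k : ℕ) (w : Wd (S × S) k) :
    wt (pairInit π) (pairT P π) k w = 0 ∨ ∃ x : Seq S, readPairs k x = w := by
  classical
  induction k with
  | zero =>
    obtain ⟨s, t⟩ := w
    by_cases h : s = t
    · subst h
      exact Or.inr ⟨fun _ => s, rfl⟩
    · left
      change pairInit π (s, t) = 0
      simp [pairInit, h]
  | succ k ih =>
    obtain ⟨w, s, t⟩ := w
    rcases ih w with h | ⟨x, rfl⟩
    · left
      change wt (pairInit π) (pairT P π) k w * _ = 0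
      rw [h, zero_mul]
    · right
      set y : Seq S := fun i => if i = -((k : ℤ) + 1) then s else if i = (k : ℤ) + 1 then t else x i
        with hy
      have hxy : readPairs k y = readPairs k x := by
        rw [readPairs_eq_iff]
        intro i h1 h2
        simp only [hy]
        rw [if_neg (by omega), if_neg (by omega)]
      refine ⟨y, ?_⟩
      change (readPairs k y, (y (-((k : ℤ) + 1)), y ((k : ℤ) + 1))) = _
      rw [hxy]
      simp only [hy, if_true]
      rw [if_neg (by omega)]

variable [Fintype S] [MeasurableSpace S] {μ : Measure (Seq S)} {A : S → S → Bool}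

theorem IsMarkovMeasure.nonempty (hμ : IsMarkovMeasure μ A P π) : Nonempty S := by
  by_contra h
  rw [not_nonempty_iff] at h
  simpa using hμ.dist_sum 0

theorem IsMarkovMeasure.exists_dist_pos (hμ : IsMarkovMeasure μ A P π) (hA : IsPrimitive A)
    (hD : Doeblin A P) : ∃ c, 0 < c ∧ ∀ n s, c ≤ π n s := by
  obtain ⟨M, -, hM⟩ := hA
  obtain ⟨δ, hδ, hPδ⟩ := hD
  have := hμ.nonempty
  have hcard : (0 : ℝ) < Fintype.card S := by exact_mod_cast Fintype.card_pos
  refine ⟨δ ^ M / Fintype.card S, by positivity, fun n s => ?_⟩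
  have := spread_mass (Adj := fun s t => A s t = true) hM hδ.le (fun j => π (n - M + j))
    (fun j v t hvt => ?_) s
  · simpa [hμ.dist_sum] using this
  · have h1 := hμ.consistent (n - M + j) t
    rw [show n - M + ((j + 1 : ℕ) : ℤ) = n - M + j + 1 by push_cast; ring, ← h1, mul_comm]
    calc π (n - M + j) v * δ ≤ π (n - M + j) v * P (n - M + j) v t :=
          mul_le_mul_of_nonneg_left ((hPδ _ v t).2 hvt) (hμ.dist_nonneg _ _)
      _ ≤ _ := Finset.single_le_sum (f := fun r => π (n - M + j) r * P (n - M + j) r t)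
          (fun r _ => mul_nonneg (hμ.dist_nonneg _ _) ((hμ.stochastic _).1 _ _))
          (Finset.mem_univ v)

theorem IsMarkovMeasure.dist_le_one (hμ : IsMarkovMeasure μ A P π) (n : ℤ) (s : S) :
    π n s ≤ 1 := by
  rw [← hμ.dist_sum n]
  exact Finset.single_le_sum (fun s _ => hμ.dist_nonneg n s) (Finset.mem_univ s)

theorem IsStochastic.le_one {E : Type*} [Fintype E] {T : E → E → ℝ} (hT : IsStochastic T)
    (s t : E) : T s t ≤ 1 := by
  rw [← hT.2 s]
  exact Finset.single_le_sum (fun t _ => hT.1 s t) (Finset.mem_univ t)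

theorem IsMarkovMeasure.reverseP_stochastic (hμ : IsMarkovMeasure μ A P π)
    (hπ : ∀ n s, 0 < π n s) (n : ℤ) : IsStochastic (reverseP P π n) := by
  refine ⟨fun s t => ?_, fun s => ?_⟩
  · rw [reverseP_of_pos hπ]
    exact div_nonneg (mul_nonneg (hμ.dist_nonneg _ _) ((hμ.stochastic _).1 _ _)) (hπ n s).le
  · simp only [reverseP_of_pos hπ]
    rw [← Finset.sum_div, hμ.consistent (n - 1) s, sub_add_cancel, div_self (hπ n s).ne']

theorem IsMarkovMeasure.dist_mul_reverseP (hμ : IsMarkovMeasure μ A P π)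
    (hπ : ∀ n s, 0 < π n s) (n : ℤ) (s : S) :
    ∑ u, π n u * reverseP P π n u s = π (n - 1) s := by
  have : ∀ u, π n u * reverseP P π n u s = π (n - 1) s * P (n - 1) s u := fun u => by
    rw [reverseP_of_pos hπ, mul_div_cancel₀ _ (hπ n u).ne']
  simp only [this, ← Finset.mul_sum, (hμ.stochastic _).2, mul_one]

theorem IsMarkovMeasure.pairT_stochastic (hμ : IsMarkovMeasure μ A P π)
    (hπ : ∀ n s, 0 < π n s) (k : ℕ) : IsStochastic (pairT P π k) := by
  have hr := hμ.reverseP_stochastic hπ (-(k : ℤ))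
  refine ⟨fun e e' => mul_nonneg (hr.1 _ _) ((hμ.stochastic _).1 _ _), fun e => ?_⟩
  simp only [pairT]
  rw [Fintype.sum_prod_type]
  simp only [← Finset.mul_sum, (hμ.stochastic _).2, mul_one, hr.2]

theorem IsMarkovMeasure.exists_le_reverseP (hμ : IsMarkovMeasure μ A P π) (hA : IsPrimitive A)
    (hD : Doeblin A P) (hπ : ∀ n s, 0 < π n s) :
    ∃ δ, 0 < δ ∧ ∀ n s t, A t s = true → δ ≤ reverseP P π n s t := by
  obtain ⟨c, hc, hcπ⟩ := hμ.exists_dist_pos hA hD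
  obtain ⟨δ, hδ, hPδ⟩ := hD
  refine ⟨c * δ, by positivity, fun n s t hts => ?_⟩
  rw [reverseP_of_pos hπ, le_div_iff₀ (hπ n s)]
  calc c * δ * π n s ≤ c * δ := mul_le_of_le_one_right (by positivity) (hμ.dist_le_one n s)
    _ ≤ _ := mul_le_mul (hcπ _ _) ((hPδ _ _ _).2 hts) hδ.le (hμ.dist_nonneg _ _)

theorem IsMarkovMeasure.exists_le_pairT (hμ : IsMarkovMeasure μ A P π) (hA : IsPrimitive A)
    (hD : Doeblin A P) (hπ : ∀ n s, 0 < π n s) :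
    ∃ δ, 0 < δ ∧ ∀ k e e', pairAdj A e e' → δ ≤ pairT P π k e e' := by
  obtain ⟨δ₁, hδ₁, h₁⟩ := hμ.exists_le_reverseP hA hD hπ
  obtain ⟨δ₂, hδ₂, h₂⟩ := hD
  exact ⟨δ₁ * δ₂, by positivity, fun k e e' h => mul_le_mul (h₁ _ _ _ h.1) ((h₂ _ _ _).2 h.2)
    hδ₂.le (hδ₁.le.trans (h₁ _ _ _ h.1))⟩

theorem IsMarkovMeasure.pairT_eq_zero (hμ : IsMarkovMeasure μ A P π) (k : ℕ) (e e' : S × S)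
    (h : ¬ pairAdj A e e') : pairT P π k e e' = 0 := by
  rw [pairAdj, not_and_or, Bool.not_eq_true, Bool.not_eq_true] at h
  rcases h with h | h
  · simp [pairT, reverseP, hμ.compat _ _ _ h]
  · simp [pairT, hμ.compat _ _ _ h]

theorem IsMarkovMeasure.pairInit_nonneg (hμ : IsMarkovMeasure μ A P π) (e : S × S) :
    0 ≤ pairInit π e := by
  unfold pairInit
  split_ifs
  exacts [hμ.dist_nonneg _ _, le_rfl]

theorem IsMarkovMeasure.sum_pairInit (hμ : IsMarkovMeasure μ A P π) :
    ∑ e, pairInit π e = 1 := by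
  classical
  rw [Fintype.sum_prod_type, ← hμ.dist_sum 0]
  refine Finset.sum_congr rfl fun s _ => ?_
  rw [Finset.sum_eq_single s]
  · simp [pairInit]
  · intro t _ hts
    simp [pairInit, hts.symm]
  · simp

theorem measurableSet_readPairs [MeasurableSingletonClass S] (k : ℕ) (w : Wd (S × S) k) :
    MeasurableSet (readPairs k ⁻¹' {w}) := by
  by_cases h : ∃ x, readPairs k x = w
  · obtain ⟨x, rfl⟩ := h
    have : readPairs k ⁻¹' {readPairs k x}
        = ⋂ i : ℤ, {y | -(k : ℤ) ≤ i → i ≤ k → y i = x i} := by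
      ext y
      simp [readPairs_eq_iff]
    rw [this]
    refine MeasurableSet.iInter fun i => ?_
    by_cases h1 : -(k : ℤ) ≤ i ∧ i ≤ k
    · simp only [h1.1, h1.2, true_imp_iff]
      exact measurableSet_eq_fun (measurable_pi_apply i) measurable_const
    · have : {y : Seq S | -(k : ℤ) ≤ i → i ≤ k → y i = x i} = Set.univ := by
        ext y
        simp only [Set.mem_ofPred_eq, Set.mem_univ, iff_true]
        exact fun h2 h3 => absurd ⟨h2, h3⟩ h1
      rw [this]
      exact MeasurableSet.univ
  · have : readPairs k ⁻¹' {w} = ∅ := by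
      ext y
      simp only [Set.mem_preimage, Set.mem_singleton_iff, Set.mem_empty_iff_false, iff_false]
      exact fun hy => h ⟨y, hy⟩
    rw [this]
    exact MeasurableSet.empty

theorem IsMarkovMeasure.isLaw (hμ : IsMarkovMeasure μ A P π) (hπ : ∀ n s, 0 < π n s) :
    IsLaw μ readPairs (pairInit π) (pairT P π) := by
  intro k w
  by_cases h : ∃ x, readPairs k x = w
  · obtain ⟨x, rfl⟩ := h
    have hset : readPairs k ⁻¹' {readPairs k x} = {y : Seq S | ∀ i : Fin (2 * k + 1),
        y (-(k : ℤ) - 1 + 1 + ((i : ℕ) : ℤ)) = x (-(k : ℤ) + (i : ℕ))} := by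
      ext y
      simp only [Set.mem_preimage, Set.mem_singleton_iff, readPairs_eq_iff, Set.mem_ofPred_eq,
        sub_add_cancel]
      constructor
      · intro h i
        exact h _ (by omega) (by omega)
      · intro h i h1 h2
        have := h ⟨(i + k).toNat, by omega⟩
        simp only [Int.toNat_of_nonneg (show 0 ≤ i + (k : ℤ) by omega)] at this
        rwa [show -(k : ℤ) + (i + k) = i by ring] at this
    rw [measureReal_def, hset, hμ.cylinder (-(k : ℤ) - 1) (2 * k)
      (fun i => x (-(k : ℤ) + (i : ℕ))), ENNReal.toReal_ofReal, wt_readPairs hπ,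
      ← Fin.prod_univ_eq_prod_range
        (fun i => P (-(k : ℤ) + i) (x (-(k : ℤ) + i)) (x (-(k : ℤ) + i + 1)))]
    · simp [add_assoc]
    · exact mul_nonneg (hμ.dist_nonneg _ _)
        (Finset.prod_nonneg fun i _ => (hμ.stochastic _).1 _ _)
  · rw [(wt_eq_zero_or_exists π P k w).resolve_right h]
    have : readPairs k ⁻¹' {w} = ∅ := by
      ext y
      simp only [Set.mem_preimage, Set.mem_singleton_iff, Set.mem_empty_iff_false, iff_false]
      exact fun hy => h ⟨y, hy⟩
    simp [this]

/-- Every cylinder set is determined by the coordinates in a window `[-k, k]`. -/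
theorem exists_eq_preimage_readPairs {C : Set (Seq S)}
    (hC : C ∈ measurableCylinders fun _ : ℤ => S) :
    ∃ (k : ℕ) (D : Finset (Wd (S × S) k)), C = readPairs k ⁻¹' D := by
  classical
  obtain ⟨s, B, -, rfl⟩ := (mem_measurableCylinders C).1 hC
  refine ⟨s.sup Int.natAbs, (Set.toFinite (readPairs _ '' cylinder s B)).toFinset, ?_⟩
  ext x
  simp only [Set.Finite.coe_toFinset, Set.mem_preimage, Set.mem_image]
  refine ⟨fun hx => ⟨x, hx, rfl⟩, ?_⟩
  rintro ⟨y, hy, hyx⟩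
  rw [readPairs_eq_iff] at hyx
  have : s.restrict x = s.restrict y := by
    funext i
    have h1 : (i : ℤ).natAbs ≤ s.sup Int.natAbs := Finset.le_sup (f := Int.natAbs) i.2
    exact (hyx i (by omega) (by omega)).symm
  rw [mem_cylinder] at hy ⊢
  rwa [this]

end Folding

/-! ### The criterion -/

section Criterion

variable {S : Type*} [Fintype S] [MeasurableSpace S]
  {μ ν : Measure (Seq S)} {A : S → S → Bool} {P P' : ℤ → S → S → ℝ} {π π' : ℤ → S → ℝ}

/-- Summable Hellinger distances give absolute continuity: the uniform estimate on cylinder sets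
passes to arbitrary null sets by approximation. -/
theorem ac_of_summable [MeasurableSingletonClass S] (hA : IsPrimitive A)
    (hμ : IsMarkovMeasure μ A P π)
    (hν : IsMarkovMeasure ν A P' π') (hπ : ∀ n s, 0 < π n s) (hπ' : ∀ n s, 0 < π' n s)
    (hD' : Doeblin A P')
    (hsum : Summable fun k => ∑ e, hel (pairT P π) (pairT P' π') k e) : μ ≪ ν := by
  have := hμ.isProb
  have := hν.isProb
  obtain ⟨c, hc, hcπ⟩ := hν.exists_dist_pos hA hD'
  obtain ⟨δ, hδ, hδT⟩ := hν.exists_le_pairT hA hD' hπ'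
  have hpq : ∀ e, pairInit π e ≤ 1 / c * pairInit π' e := by
    intro e
    unfold pairInit
    split_ifs
    · rw [one_div_mul_eq_div, le_div_iff₀ hc]
      calc π 0 e.1 * c ≤ 1 * c := by gcongr; exact hμ.dist_le_one _ _
        _ ≤ _ := by rw [one_mul]; exact hcπ _ _
    · simp
  have hTU : ∀ k e e', pairT P π k e e' ≤ max 1 (1 / δ) * pairT P' π' k e e' := by
    intro k e e'
    by_cases h : pairAdj A e e'
    · calc pairT P π k e e' ≤ 1 := (hμ.pairT_stochastic hπ k).le_one e e'
        _ = 1 / δ * δ := by field_simp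
        _ ≤ _ := mul_le_mul (le_max_right _ _) (hδT k e e' h) hδ.le (by positivity)
    · rw [hμ.pairT_eq_zero k e e' h, hν.pairT_eq_zero k e e' h, mul_zero]
  refine Measure.AbsolutelyContinuous.mk fun N hN hνN => ?_
  rw [← measureReal_eq_zero_iff]
  refine le_antisymm (le_of_forall_pos_le_add fun ε hε => ?_) measureReal_nonneg
  obtain ⟨B, hB0, hB⟩ := exists_real_le_mul_add (μ := μ) (ν := ν) measurableSet_readPairs
    hμ.pairInit_nonneg hν.pairInit_nonneg hμ.sum_pairInit (hμ.pairT_stochastic hπ)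
    (hν.pairT_stochastic hπ') (hμ.isLaw hπ) (hν.isLaw hπ') (by positivity) (le_max_left _ _)
    hpq hTU hsum (half_pos hε)
  set θ : ℝ := ε / 2 / (B + 1) with hθ
  have hθ0 : 0 < θ := by positivity
  -- approximate the null set `N` by a cylinder set in the measure `μ + ν`
  obtain ⟨C, hC, hCN⟩ := exists_measure_symmDiff_lt_of_generateFrom_isSetRing (μ := μ + ν)
    (isSetRing_measurableCylinders (α := fun _ : ℤ => S))
    ⟨{Set.univ}, Set.countable_singleton _, by simpa using univ_mem_measurableCylinders (fun _ : ℤ => S), by simp⟩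
    generateFrom_measurableCylinders.symm hN (ENNReal.ofReal_pos.2 hθ0)
  obtain ⟨k, D, rfl⟩ := exists_eq_preimage_readPairs hC
  rw [Measure.add_apply] at hCN
  have hreal : μ.real (symmDiff (readPairs k ⁻¹' D) N)
      + ν.real (symmDiff (readPairs k ⁻¹' D) N) < θ := by
    rw [measureReal_def, measureReal_def,
      ← ENNReal.toReal_add (measure_ne_top _ _) (measure_ne_top _ _)]
    exact (ENNReal.lt_ofReal_iff_toReal_lt (by finiteness)).1 hCN
  have hμN : μ.real N ≤ μ.real (readPairs k ⁻¹' D) + μ.real (symmDiff (readPairs k ⁻¹' D) N) := by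
    refine (measureReal_mono ?_).trans (measureReal_union_le _ _)
    intro x hx
    by_cases hxD : x ∈ readPairs k ⁻¹' (D : Set _)
    · exact Or.inl hxD
    · exact Or.inr (Or.inr ⟨hx, hxD⟩)
  have hνC : ν.real (readPairs k ⁻¹' D) ≤ ν.real N + ν.real (symmDiff (readPairs k ⁻¹' D) N) := by
    refine (measureReal_mono ?_).trans (measureReal_union_le _ _)
    intro x hx
    by_cases hxN : x ∈ N
    · exact Or.inl hxN
    · exact Or.inr (Or.inl ⟨hx, hxN⟩)
  rw [measureReal_def ν N, hνN, ENNReal.toReal_zero, zero_add] at hνC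
  have h1 := hB k D
  have h2 : B * ν.real (readPairs k ⁻¹' D)
      ≤ B * ν.real (symmDiff (readPairs k ⁻¹' D) N) := by gcongr
  have h3 : (B + 1) * θ = ε / 2 := by rw [hθ]; field_simp
  have h4 : 0 ≤ μ.real (symmDiff (readPairs k ⁻¹' (D : Set _)) N) := measureReal_nonneg
  have h5 : 0 ≤ ν.real (symmDiff (readPairs k ⁻¹' (D : Set _)) N) := measureReal_nonneg
  nlinarith

theorem summable_of_ac [MeasurableSingletonClass S] (hA : IsPrimitive A)
    (hμ : IsMarkovMeasure μ A P π)
    (hν : IsMarkovMeasure ν A P' π') (hπ : ∀ n s, 0 < π n s) (hπ' : ∀ n s, 0 < π' n s)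
    (hD : Doeblin A P) (hD' : Doeblin A P') (hac : μ ≪ ν) :
    Summable fun k => ∑ e, hel (pairT P π) (pairT P' π') k e := by
  have := hμ.isProb
  have := hν.isProb
  have := hμ.nonempty
  obtain ⟨δ₁, hδ₁, h₁⟩ := hμ.exists_le_pairT hA hD hπ
  obtain ⟨δ₂, hδ₂, h₂⟩ := hν.exists_le_pairT hA hD' hπ'
  obtain ⟨M, -, hM⟩ := hA
  exact summable_hel_of_ac hac measurableSet_readPairs hμ.pairInit_nonneg hν.pairInit_nonneg
    (hμ.pairT_stochastic hπ) (hν.pairT_stochastic hπ') (hμ.isLaw hπ) (hν.isLaw hπ')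
    (pair_path hM) (lt_min hδ₁ hδ₂) (fun k s t h => (min_le_left _ _).trans (h₁ k s t h))
    (fun k s t h => (min_le_right _ _).trans (h₂ k s t h))

theorem hel_comm {E : Type*} [Fintype E] (T U : ℕ → E → E → ℝ) : hel T U = hel U T := by
  funext k v
  exact Finset.sum_congr rfl fun e _ => by ring

/-- Summability forces `P n → Q` at both ends. The products of the entries converge, and summing
out one factor gives convergence of `P n` and of the reverse matrices at `-n`; the latter makes the
marginals at `-n` converge to the stationary law, which turns reverse matrices into forward ones. -/
theorem tendsto_of_summable (hA : IsPrimitive A) (hμ : IsMarkovMeasure μ A P π)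
    {Q : S → S → ℝ} {lam : S → ℝ} (hν : IsMarkovMeasure ν A (fun _ => Q) (fun _ => lam))
    (hDQ : Doeblin A (fun _ => Q)) (hπ : ∀ n s, 0 < π n s) (hlam : ∀ s, 0 < lam s)
    (hsum : Summable fun k => ∑ e, hel (pairT P π) (pairT (fun _ => Q) (fun _ => lam)) k e) :
    Tendsto (fun n : ℕ => P (n : ℤ)) atTop (𝓝 Q) ∧
      Tendsto (fun n : ℕ => P (-(n : ℤ))) atTop (𝓝 Q) := by
  have hne := hμ.nonempty
  set B : S → S → ℝ := reverseP (fun _ => Q) (fun _ => lam) 0 with hB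
  have hBs : IsStochastic B := hν.reverseP_stochastic (fun _ => hlam) 0
  have hQs : IsStochastic Q := hν.stochastic 0
  have hentry : ∀ u v s t, Tendsto (fun k : ℕ => reverseP P π (-(k : ℤ)) u s * P k v t) atTop
      (𝓝 (B u s * Q v t)) := by
    intro u v s t
    have hTn := (hμ.pairT_stochastic hπ)
    have h0 : Tendsto (fun k => (√(pairT P π k (u, v) (s, t)) - √(B u s * Q v t)) ^ 2)
        atTop (𝓝 0) := by
      refine squeeze_zero (fun k => sq_nonneg _) (fun k => ?_) hsum.tendsto_atTop_zero
      calc (√(pairT P π k (u, v) (s, t)) - √(B u s * Q v t)) ^ 2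
          ≤ hel (pairT P π) (pairT (fun _ => Q) (fun _ => lam)) k (u, v) :=
            Finset.single_le_sum (f := fun e => (√(pairT P π k (u, v) e)
              - √(pairT (fun _ => Q) (fun _ => lam) k (u, v) e)) ^ 2)
              (fun e _ => sq_nonneg _) (Finset.mem_univ (s, t))
        _ ≤ _ := Finset.single_le_sum
            (f := fun e => hel (pairT P π) (pairT (fun _ => Q) (fun _ => lam)) k e)
            (fun e _ => hel_nonneg ..) (Finset.mem_univ (u, v))
    have h1 : Tendsto (fun k => √(pairT P π k (u, v) (s, t)) - √(B u s * Q v t))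
        atTop (𝓝 0) := by
      have := h0.sqrt
      simp only [Real.sqrt_sq_eq_abs, Real.sqrt_zero] at this
      exact (tendsto_zero_iff_abs_tendsto_zero _).2 this
    have h2 := ((h1.add_const (√(B u s * Q v t))).pow 2)
    simp only [sub_add_cancel, zero_add] at h2
    rw [Real.sq_sqrt (mul_nonneg (hBs.1 _ _) (hQs.1 _ _))] at h2
    refine h2.congr fun k => ?_
    rw [Real.sq_sqrt ((hTn k).1 _ _)]
    rfl
  have hfwd : ∀ v t, Tendsto (fun k : ℕ => P k v t) atTop (𝓝 (Q v t)) := by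
    intro v t
    obtain ⟨u⟩ := hne
    have := tendsto_finsetSum Finset.univ fun s _ => hentry u v s t
    simpa only [← Finset.sum_mul, hBs.2, (hμ.reverseP_stochastic hπ _).2, one_mul] using this
  have hbwd : ∀ u s, Tendsto (fun k : ℕ => reverseP P π (-(k : ℤ)) u s) atTop (𝓝 (B u s)) := by
    intro u s
    obtain ⟨v⟩ := hne
    have := tendsto_finsetSum Finset.univ fun t _ => hentry u v s t
    simpa only [← Finset.mul_sum, hQs.2, (hμ.stochastic _).2, mul_one] using this
  have hmarg : ∀ s, Tendsto (fun k : ℕ => π (-(k : ℤ)) s) atTop (𝓝 (lam s)) := by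
    obtain ⟨δ, hδ, hBδ⟩ := hν.exists_le_reverseP hA hDQ (fun _ => hlam)
    obtain ⟨M, -, hM⟩ := hA
    refine tendsto_stationary (M := M) (Adj := fun s t => A t s = true) hBs (hν.dist_sum 0)
      (hν.dist_mul_reverseP (fun _ => hlam) 0) (fun s t => ?_) hδ (fun s t h => hBδ 0 s t h)
      (fun n s => hμ.dist_nonneg _ s) (fun n => hμ.dist_sum _) hbwd (fun n s => ?_)
    · obtain ⟨u, h0, hM', hu⟩ := hM t s
      refine ⟨fun i => u (M - i), by simp [hM'], by simp [h0], fun i hi => ?_⟩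
      have := hu (M - (i + 1)) (by omega)
      rwa [show M - (i + 1) + 1 = M - i by omega] at this
    · rw [hμ.dist_mul_reverseP hπ]
      congr 1
      push_cast
      ring
  refine ⟨tendsto_pi_nhds.2 fun v => tendsto_pi_nhds.2 fun t => hfwd v t,
    tendsto_pi_nhds.2 fun s => tendsto_pi_nhds.2 fun u => ?_⟩
  rw [← tendsto_add_atTop_iff_nat 1]
  have hlim := ((hbwd u s).mul (hmarg u)).div ((tendsto_add_atTop_iff_nat 1).2 (hmarg s))
    (hlam s).ne'
  have hval : B u s * lam u / lam s = Q s u := by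
    rw [hB, reverseP_of_pos (fun _ => hlam)]
    have := (hlam u).ne'
    have := (hlam s).ne'
    field_simp
  rw [hval] at hlim
  refine hlim.congr fun k => ?_
  have h1 : -((k + 1 : ℕ) : ℤ) = -(k : ℤ) - 1 := by push_cast; ring
  simp only [Pi.div_apply, h1]
  rw [reverseP_of_pos hπ]
  have := (hπ (-(k : ℤ)) u).ne'
  have := (hπ (-(k : ℤ) - 1) s).ne'
  field_simp

end Criterion

/-- **Corollary (equivalence to a homogeneous Markov measure).**
Let `μ` be a Markov measure with the Doeblin condition on a topologically mixing
SFT, and `ν` the homogeneous Markov measure of a stochastic matrix `Q` (compatible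
with `A`, with the Doeblin condition) and its stationary distribution `λ`.
Then a necessary condition for `μ ~ ν` is `lim_{|n|→∞} P_n = Q`; and if this limit
condition holds, then `μ ~ ν` iff
`Σ_{n≥1} Σ_{s,u,v,t} (√(P̂_{-n}(u,s) P_n(v,t)) − √(Q̂(u,s) Q(v,t)))² < ∞`. -/
theorem equivalent_to_homogeneous_iff
    {S : Type*} [Fintype S] [MeasurableSpace S] [MeasurableSingletonClass S]
    (A : S → S → Bool) (hA : IsPrimitive A)
    (P : ℤ → S → S → ℝ) (π : ℤ → S → ℝ) (μ : Measure (Seq S))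
    (hμ : IsMarkovMeasure μ A P π) (hD : Doeblin A P)
    (Q : S → S → ℝ) (lam : S → ℝ) (ν : Measure (Seq S))
    (hν : IsMarkovMeasure ν A (fun _ => Q) (fun _ => lam))
    (hDQ : Doeblin A (fun _ => Q)) :
    ((μ ≪ ν ∧ ν ≪ μ) →
      Tendsto (fun n : ℕ => P (n : ℤ)) atTop (𝓝 Q) ∧
      Tendsto (fun n : ℕ => P (-(n : ℤ))) atTop (𝓝 Q)) ∧
    ((Tendsto (fun n : ℕ => P (n : ℤ)) atTop (𝓝 Q) ∧
      Tendsto (fun n : ℕ => P (-(n : ℤ))) atTop (𝓝 Q)) →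
      ((μ ≪ ν ∧ ν ≪ μ) ↔
        Summable (fun n : ℕ => ∑ s : S, ∑ u : S, ∑ v : S, ∑ t : S,
          (Real.sqrt (reverseP P π (-((n : ℤ) + 1)) u s * P ((n : ℤ) + 1) v t)
            - Real.sqrt (reverseQ Q lam u s * Q v t)) ^ 2))) := by
  classical
  obtain ⟨c, hc, hcπ⟩ := hμ.exists_dist_pos hA hD
  obtain ⟨c', hc', hclam⟩ := hν.exists_dist_pos hA hDQ
  have hπ : ∀ n s, 0 < π n s := fun n s => hc.trans_le (hcπ n s)
  have hlam : ∀ s, 0 < lam s := fun s => hc'.trans_le (hclam 0 s)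
  have hiff : (μ ≪ ν ∧ ν ≪ μ) ↔
      Summable fun k => ∑ e, hel (pairT P π) (pairT (fun _ => Q) (fun _ => lam)) k e :=
    ⟨fun h => summable_of_ac hA hμ hν hπ (fun _ => hlam) hD hDQ h.1, fun h =>
      ⟨ac_of_summable hA hμ hν hπ (fun _ => hlam) hDQ h,
        ac_of_summable hA hν hμ (fun _ => hlam) hπ hD (by rwa [hel_comm])⟩⟩
  refine ⟨fun h => tendsto_of_summable hA hμ hν hDQ hπ hlam (hiff.1 h), fun _ => ?_⟩
  rw [hiff, ← summable_nat_add_iff 1]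
  refine iff_of_eq (congrArg Summable (funext fun n => ?_))
  rw [Fintype.sum_prod_type]
  simp only [hel, Fintype.sum_prod_type]
  -- move the sum over `s` outermost
  rw [Finset.sum_congr rfl fun u _ => Finset.sum_comm, Finset.sum_comm]
  refine Finset.sum_congr rfl fun s _ => Finset.sum_congr rfl fun u _ =>
    Finset.sum_congr rfl fun v _ => Finset.sum_congr rfl fun t _ => ?_
  simp only [pairT, reverseQ, reverseP_of_pos (fun _ : ℤ => hlam), Nat.cast_add, Nat.cast_one]

end MarkovSFT
end

section
/- Let (a_n : n ≥ 1) be a sequence of non-negative real numbers with Σ_{n≥1} a_n = ∞, let (Ω, ℙ) be a probability space, and let (A_n : n ≥ 1) be a sequence of measurable events in Ω. Then ℙ( Σ_{n≥1} a_n · 1_{A_n} = ∞ ) ≥ liminf_{n→∞} ℙ(A_n). -/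
/-!
Let `S = ∑ aₙ 1_{Aₙ}` and let `c < liminf ℙ(Aₙ)`. If `ℙ(S > M) < c` for some finite `M`, then
`δ = c - ℙ(S > M) > 0` satisfies `ℙ(Aₙ ∩ {S ≤ M}) ≥ δ` for all large `n`, so integrating `S` over
`{S ≤ M}` gives at least `δ` times a tail of `∑ aₙ`, which is `∞`; but that integral is at most `M`.
Hence `ℙ(S > M) ≥ c` for every `M` (`le_measure_lt_tsum_indicator`), and continuity of `ℙ` from
above along the decreasing events `{S > M}` gives `ℙ(S = ∞) ≥ c`.
-/

open MeasureTheory Filter Topology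

namespace ProbabilisticLemma

lemma tsum_ofReal_add_eq_top {a : ℕ → ℝ} (ha : ∀ n, 0 ≤ a n) (hdiv : ¬ Summable a) (N : ℕ) :
    ∑' n, ENNReal.ofReal (a (n + N)) = ⊤ := by
  by_contra h
  apply hdiv
  rw [← summable_nat_add_iff N]
  refine (ENNReal.summable_toReal h).congr fun n => ?_
  exact ENNReal.toReal_ofReal (ha _)

lemma measurable_tsum_indicator {Ω : Type*} [MeasurableSpace Ω] (a : ℕ → ℝ)
    {A : ℕ → Set Ω} (hA : ∀ n, MeasurableSet (A n)) :
    Measurable fun ω => ∑' n, (A n).indicator (fun _ => ENNReal.ofReal (a n)) ω :=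
  Measurable.tsum fun n => measurable_const.indicator (hA n)

lemma le_measure_lt_tsum_indicator {Ω : Type*} [MeasurableSpace Ω] (ℙ : Measure Ω)
    [IsProbabilityMeasure ℙ] {a : ℕ → ℝ} (ha : ∀ n, 0 ≤ a n) (hdiv : ¬ Summable a)
    {A : ℕ → Set Ω} (hA : ∀ n, MeasurableSet (A n)) {c : ENNReal}
    (hc : ∀ᶠ n in atTop, c ≤ ℙ (A n)) (M : ℕ) :
    c ≤ ℙ {ω | (M : ENNReal) < ∑' n, (A n).indicator (fun _ => ENNReal.ofReal (a n)) ω} := by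
  set F := {ω | (M : ENNReal) < ∑' n, (A n).indicator (fun _ => ENNReal.ofReal (a n)) ω} with hF
  have hFm : MeasurableSet F := measurableSet_lt measurable_const (measurable_tsum_indicator a hA)
  by_contra! hlt
  obtain ⟨N, hN⟩ := eventually_atTop.1 hc
  have hδ : c - ℙ F ≠ 0 := (tsub_pos_of_lt hlt).ne'
  have hinter : ∀ n, c - ℙ F ≤ ℙ (A (n + N) ∩ Fᶜ) := fun n => by
    rw [tsub_le_iff_right]
    calc c ≤ ℙ (A (n + N)) := hN _ (Nat.le_add_left _ _)
      _ ≤ ℙ (A (n + N) ∩ F) + ℙ (A (n + N) \ F) := measure_le_inter_add_sdiff _ _ _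
      _ ≤ ℙ F + ℙ (A (n + N) ∩ Fᶜ) := by
        rw [Set.sdiff_eq]
        gcongr
        exact Set.inter_subset_right
      _ = _ := add_comm _ _
  have hupper : ∫⁻ ω in Fᶜ, ∑' n, (A n).indicator (fun _ => ENNReal.ofReal (a n)) ω ∂ℙ ≤ M :=
    calc _ ≤ ∫⁻ _ in Fᶜ, (M : ENNReal) ∂ℙ :=
          setLIntegral_mono' hFm.compl fun ω hω => not_lt.1 hω
      _ = M * ℙ Fᶜ := setLIntegral_const _ _
      _ ≤ M := mul_le_of_le_one_right' prob_le_one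
  have hlower : ∫⁻ ω in Fᶜ, ∑' n, (A n).indicator (fun _ => ENNReal.ofReal (a n)) ω ∂ℙ = ⊤ := by
    rw [lintegral_tsum fun n => (measurable_const.indicator (hA n)).aemeasurable, eq_top_iff]
    calc (⊤ : ENNReal) = ∑' n, ENNReal.ofReal (a (n + N)) * (c - ℙ F) := by
          rw [ENNReal.tsum_mul_right, tsum_ofReal_add_eq_top ha hdiv, ENNReal.top_mul hδ]
      _ ≤ ∑' n, ENNReal.ofReal (a (n + N)) * ℙ (A (n + N) ∩ Fᶜ) :=
          ENNReal.tsum_le_tsum fun n => by gcongr; exact hinter n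
      _ ≤ ∑' n, ENNReal.ofReal (a n) * ℙ (A n ∩ Fᶜ) :=
          ENNReal.tsum_comp_le_tsum_of_injective (add_left_injective N)
            fun n => ENNReal.ofReal (a n) * ℙ (A n ∩ Fᶜ)
      _ = _ := by
          refine tsum_congr fun n => ?_
          rw [lintegral_indicator_const (hA n), Measure.restrict_apply (hA n)]
  rw [hlower] at hupper
  exact absurd hupper (by simp)

/-- **Probabilistic lemma.**
If `(a_n)` are non-negative with `Σ a_n = ∞` and `(A_n)` are events in a
probability space `(Ω, ℙ)`, then
`ℙ(Σ a_n 1_{A_n} = ∞) ≥ liminf ℙ(A_n)`. -/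
theorem liminf_le_prob_sum_indicator_eq_top
    {Ω : Type*} [MeasurableSpace Ω] (ℙ : Measure Ω) [IsProbabilityMeasure ℙ]
    (a : ℕ → ℝ) (ha : ∀ n, 0 ≤ a n) (hdiv : ¬ Summable a)
    (A : ℕ → Set Ω) (hA : ∀ n, MeasurableSet (A n)) :
    Filter.liminf (fun n : ℕ => ℙ (A n)) atTop
      ≤ ℙ {ω : Ω | ∑' n : ℕ,
          Set.indicator (A n) (fun _ => ENNReal.ofReal (a n)) ω = ⊤} := by
  refine le_of_forall_lt_imp_le_of_dense fun c hc => ?_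
  have hev : ∀ᶠ n in atTop, c ≤ ℙ (A n) :=
    (eventually_lt_of_lt_liminf hc).mono fun _ h => h.le
  have hset : {ω : Ω | ∑' n : ℕ, Set.indicator (A n) (fun _ => ENNReal.ofReal (a n)) ω = ⊤} =
      ⋂ M : ℕ, {ω | (M : ENNReal) < ∑' n, (A n).indicator (fun _ => ENNReal.ofReal (a n)) ω} := by
    ext ω
    simp only [Set.mem_ofPred_eq, Set.mem_iInter]
    refine ⟨fun h M => h ▸ ENNReal.natCast_lt_top M, fun h => ?_⟩
    by_contra hne
    obtain ⟨M, hM⟩ := ENNReal.exists_nat_gt hne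
    exact lt_asymm hM (h M)
  have hanti : Antitone fun M : ℕ =>
      {ω | (M : ENNReal) < ∑' n, (A n).indicator (fun _ => ENNReal.ofReal (a n)) ω} :=
    fun M K hMK ω (hω : (K : ENNReal) < _) =>
      show (M : ENNReal) < _ from lt_of_le_of_lt (Nat.cast_le.2 hMK) hω
  rw [hset, hanti.measure_iInter
    (fun M => (measurableSet_lt measurable_const (measurable_tsum_indicator a hA)).nullMeasurableSet)
    ⟨0, measure_ne_top _ _⟩]
  exact le_iInf fun M => le_measure_lt_tsum_indicator ℙ ha hdiv hA hev M

end ProbabilisticLemma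
end

section
/- Let (X_A, μ) be a topologically mixing Markov subshift of finite type satisfying the Doeblin condition, and suppose the left shift T is nonsingular with respect to μ. Let V : B(i) ⇌ B'(j) be an (asymmetric) admissible permutation associated with an admissible pair (B, B') and coordinates i, j ∈ ℤ with |i − j| ≥ Length(B,B'). Then for μ-a.e. x in the domain B(i) ∩ B'(j) of V, the ratio of Radon–Nikodym derivatives (d(μ∘T^n∘V)/dμ)(x) / (d(μ∘T^n)/dμ)(x) converges to 1 as |n| → ∞; the same holds for symmetric admissible permutations V : B(i) ⟲ B'(j) on their domains. In other words, every admissible permutation belongs to the renormalization pseudo full-group of the shift with respect to the finite-coordinate-change equivalence relation. -/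
/-!
Let `V` exchange `B` and `B'`. Because the two blocks have the same first and the same last symbol,
`V` changes only the transitions inside the two blocks. Under the Markov measure `μ ∘ Tⁿ` (whose
transition matrices are `P_{k-n}`) the mass of a long cylinder inside `B(i) ∩ B'(j)` is therefore
multiplied by the constant

`∏_l P_{i+l-n}(B'_l, B'_{l+1}) / P_{j+l-n}(B'_l, B'_{l+1}) *
  (P_{j+l-n}(B_l, B_{l+1}) / P_{i+l-n}(B_l, B_{l+1}))`,

called `distortion` (`prod_swapBlocks`, `restrict_map_symSwap`). Since `μ ≪ μ ∘ Tⁿ`, the quotient of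
Radon–Nikodym derivatives equals this constant almost everywhere on `B(i) ∩ B'(j)`, and the set
`B'(i) ∩ B(j)` is treated by interchanging the roles of `B` and `B'`.

It remains to see that the constant tends to `1`. By the Doeblin lower bound it suffices that
`P_{k+1}(s,t) - P_k(s,t) → 0` as `|k| → ∞` (`tendsto_P_succ_sub`). The functions
`f_k(y) = 1[y_k = s] (1[y_{k+1} = t] - P_k(s,t))` are bounded by one and pairwise orthogonal in
`L²(μ)` by the Markov property, so by Bessel's inequality and density they tend to zero weakly
against every function of `L¹(μ)` (`tendsto_integral_mul_of_orthogonal`). Applied to the density of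
the law of `T` under `μ`, which exists by nonsingularity, this gives
`π_{k+1}(s) (P_{k+1}(s,t) - P_k(s,t)) → 0`, and primitivity together with the Doeblin condition
bounds `π_{k+1}(s)` away from zero (`exists_dist_lower_bound`).
-/

open MeasureTheory Filter Topology

namespace MarkovSFT

/-- The cylinder set where the block `B` (of length `L`) occupies the
coordinates `i, …, i+L-1`. -/
def cylOf {S : Type*} (B : ℕ → S) (L : ℕ) (i : ℤ) : Set (Seq S) :=
  {x | ∀ l : ℕ, l < L → x (i + (l : ℤ)) = B l}

/-- Replace the coordinates `i, …, i+L-1` with the block `B'` and the coordinates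
`j, …, j+L-1` with the block `B`. -/
def swapBlocks {S : Type*} (B B' : ℕ → S) (L : ℕ) (i j : ℤ) (x : Seq S) : Seq S :=
  fun k =>
    if i ≤ k ∧ k < i + (L : ℤ) then B' (k - i).toNat
    else if j ≤ k ∧ k < j + (L : ℤ) then B (k - j).toNat
    else x k

open scoped Classical in
/-- The symmetric admissible permutation `V : B(i) ⟲ B'(j)`: it exchanges the
blocks `B` and `B'` between coordinates `i` and `j` on
`(B(i) ∩ B'(j)) ∪ (B'(i) ∩ B(j))` and is the identity elsewhere. On
`B(i) ∩ B'(j)` it coincides with the asymmetric admissible permutation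
`V : B(i) ⇌ B'(j)`. -/
noncomputable def symSwap {S : Type*} (B B' : ℕ → S) (L : ℕ) (i j : ℤ)
    (x : Seq S) : Seq S :=
  if x ∈ cylOf B L i ∩ cylOf B' L j then swapBlocks B B' L i j x
  else if x ∈ cylOf B' L i ∩ cylOf B L j then swapBlocks B' B L i j x
  else x

set_option linter.unusedSectionVars false

/-! ### Weak convergence of bounded orthogonal sequences -/

/-- Bessel's inequality for orthogonal vectors of norm at most one (some may vanish). -/
lemma sum_inner_sq_le {E : Type*} [NormedAddCommGroup E] [InnerProductSpace ℝ E]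
    {ι : Type*} (u : ι → E) (hu : ∀ k, ‖u k‖ ≤ 1)
    (ho : ∀ k l, k ≠ l → inner ℝ (u k) (u l) = 0) (h : E) (F : Finset ι) :
    ∑ k ∈ F, (inner ℝ (u k) h) ^ 2 ≤ ‖h‖ ^ 2 := by
  classical
  set a : ι → ℝ := fun k => inner ℝ (u k) h with ha
  set v : E := ∑ k ∈ F, a k • u k with hv
  have h1 : inner ℝ v h = ∑ k ∈ F, (a k) ^ 2 := by
    rw [hv, sum_inner]
    refine Finset.sum_congr rfl fun k _ => ?_
    rw [real_inner_smul_left, sq]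
  have h2 : inner ℝ v v ≤ ∑ k ∈ F, (a k) ^ 2 := by
    rw [hv, sum_inner]
    refine Finset.sum_le_sum fun k hk => ?_
    rw [inner_sum, Finset.sum_eq_single_of_mem k hk]
    · rw [real_inner_smul_left, real_inner_smul_right, real_inner_self_eq_norm_sq]
      have : ‖u k‖ ^ 2 ≤ 1 := pow_le_one₀ (norm_nonneg _) (hu k)
      nlinarith [sq_nonneg (a k)]
    · intro l _ hl
      rw [real_inner_smul_left, real_inner_smul_right, ho k l hl.symm]
      simp
  have h3 : 0 ≤ inner ℝ (h - v) (h - v) := real_inner_self_nonneg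
  rw [inner_sub_left, inner_sub_right, inner_sub_right, real_inner_self_eq_norm_sq h] at h3
  have hc : inner ℝ h v = inner ℝ v h := real_inner_comm _ _
  linarith

/-- A uniformly bounded orthogonal sequence tends weakly to zero against `L¹` functions: for `L²`
functions this is Bessel's inequality, and the general case follows by density. -/
lemma tendsto_integral_mul_of_orthogonal {Ω : Type*} [MeasurableSpace Ω] (μ : Measure Ω)
    [IsProbabilityMeasure μ] {ι : Type*} (f : ι → Ω → ℝ) (hf : ∀ k, Measurable (f k))
    (hb : ∀ k x, |f k x| ≤ 1) (ho : ∀ k l, k ≠ l → ∫ x, f k x * f l x ∂μ = 0)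
    (h : Ω → ℝ) (hh : Integrable h μ) :
    Tendsto (fun k => ∫ x, f k x * h x ∂μ) cofinite (𝓝 0) := by
  have hfL : ∀ k, MemLp (f k) 2 μ := fun k =>
    MemLp.of_bound (hf k).aestronglyMeasurable 1 (ae_of_all _ fun x => by simpa using hb k x)
  have inner_eq : ∀ k (g : Ω → ℝ) (hg : MemLp g 2 μ),
      inner ℝ ((hfL k).toLp (f k)) (hg.toLp g) = ∫ x, f k x * g x ∂μ := by
    intro k g hg
    rw [L2.inner_def]
    refine integral_congr_ae ?_
    filter_upwards [(hfL k).coeFn_toLp, hg.coeFn_toLp] with x h1 h2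
    rw [h1, h2]
    simp [mul_comm]
  have normle : ∀ k, ‖(hfL k).toLp (f k)‖ ≤ 1 := by
    intro k
    rw [Lp.norm_toLp]
    have := eLpNorm_le_of_ae_bound (p := 2) (μ := μ) (f := f k) (C := 1)
      (ae_of_all _ fun x => by simpa using hb k x)
    simp at this
    exact ENNReal.toReal_le_of_le_ofReal zero_le_one (by simpa using this)
  have key : ∀ g : Ω → ℝ, MemLp g 2 μ →
      Tendsto (fun k => ∫ x, f k x * g x ∂μ) cofinite (𝓝 0) := by
    intro g hg
    have hs : Summable (fun k => (∫ x, f k x * g x ∂μ) ^ 2) := by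
      refine summable_of_sum_le (c := ‖hg.toLp g‖ ^ 2) (fun k => sq_nonneg _) fun F => ?_
      have := sum_inner_sq_le (fun k => (hfL k).toLp (f k)) normle
        (fun k l hkl => by rw [inner_eq k _ (hfL l)]; exact ho k l hkl) (hg.toLp g) F
      simpa only [inner_eq] using this
    have h0 := hs.tendsto_cofinite_zero
    have := h0.sqrt
    simp only [Real.sqrt_sq_eq_abs, Real.sqrt_zero] at this
    exact (tendsto_zero_iff_abs_tendsto_zero _).2 this
  rw [Metric.tendsto_nhds]
  intro ε hε
  obtain ⟨g, hg1, hg2⟩ := (memLp_one_iff_integrable.2 hh).exists_simpleFunc_eLpNorm_sub_lt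
    (by simp) (ε := ENNReal.ofReal (ε / 2)) (by simpa using hε)
  have hgL : MemLp g 2 μ := SimpleFunc.memLp_of_isFiniteMeasure g 2 μ
  have hgi : Integrable g μ := memLp_one_iff_integrable.1 hg2
  have hsub : Integrable (fun x => h x - g x) μ := hh.sub hgi
  have hd : ∫ x, |h x - g x| ∂μ < ε / 2 := by
    have e : ∫ x, |h x - g x| ∂μ = (eLpNorm (h - ⇑g) 1 μ).toReal := by
      rw [eLpNorm_one_eq_lintegral_enorm,
        ← integral_norm_eq_lintegral_enorm (hh.sub hgi).aestronglyMeasurable]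
      rfl
    rw [e]
    exact (ENNReal.lt_ofReal_iff_toReal_lt (hg1.trans_le le_top).ne).1 hg1
  have hbi : ∀ k (w : Ω → ℝ), Integrable w μ → Integrable (fun x => f k x * w x) μ := by
    intro k w hw
    exact hw.bdd_mul (hf k).aestronglyMeasurable (c := 1)
      (ae_of_all _ fun x => by simpa using hb k x)
  filter_upwards [(Metric.tendsto_nhds.1 (key g hgL)) (ε / 2) (half_pos hε)] with k hk
  rw [Real.dist_eq, sub_zero] at hk ⊢
  have e : ∫ x, f k x * h x ∂μ = ∫ x, f k x * g x ∂μ + ∫ x, f k x * (h x - g x) ∂μ := by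
    rw [← integral_add (hbi k _ hgi) (hbi k _ hsub)]
    congr 1; ext x; ring
  have e2 : |∫ x, f k x * (h x - g x) ∂μ| ≤ ∫ x, |h x - g x| ∂μ := by
    refine (abs_integral_le_integral_abs).trans
      (integral_mono (hbi k _ hsub).abs hsub.abs fun x => ?_)
    simp only [abs_mul]
    exact mul_le_of_le_one_left (abs_nonneg _) (hb k x)
  rw [e]
  calc _ ≤ _ := abs_add_le _ _
    _ < ε := by linarith

/-! ### Box cylinders -/

/-- The cylinder of all sequences that agree with `x` on the integer interval `[a, b]`. -/
def box {S : Type*} (a b : ℤ) (x : Seq S) : Set (Seq S) :=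
  {y | ∀ k, a ≤ k → k ≤ b → y k = x k}

lemma box_eq_of_mem {S : Type*} {a b : ℤ} {x y : Seq S} (h : y ∈ box a b x) :
    box a b x = box a b y := by
  ext z
  exact ⟨fun hz k h1 h2 => (hz k h1 h2).trans (h k h1 h2).symm,
    fun hz k h1 h2 => (hz k h1 h2).trans (h k h1 h2)⟩

lemma measurable_shiftZ {S : Type*} [MeasurableSpace S] (n : ℤ) :
    Measurable (shiftZ (S := S) n) :=
  measurable_pi_iff.2 fun k => measurable_pi_apply (k + n)

lemma measurableSet_coord {S : Type*} [MeasurableSpace S] [MeasurableSingletonClass S]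
    (l : ℤ) (u : S) : MeasurableSet {y : Seq S | y l = u} :=
  (measurableSet_singleton u).preimage (measurable_pi_apply l)

lemma measurableSet_box {S : Type*} [MeasurableSpace S]
    [MeasurableSingletonClass S] (a b : ℤ) (x : Seq S) : MeasurableSet (box a b x) := by
  have : box a b x = ⋂ k : ℤ, ⋂ (_ : a ≤ k), ⋂ (_ : k ≤ b), (fun y : Seq S => y k) ⁻¹' {x k} := by
    ext y; simp [box]
  rw [this]
  exact MeasurableSet.iInter fun k => MeasurableSet.iInter fun _ => MeasurableSet.iInter fun _ =>
    measurable_pi_apply k (measurableSet_singleton _)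

lemma finite_range_box {S : Type*} [Finite S] (a b : ℤ) :
    (Set.range (box (S := S) a b)).Finite := by
  let r : Seq S → (Finset.Icc a b → S) := fun x k => x k
  refine Set.Finite.subset (Set.finite_range
    (fun w : Finset.Icc a b → S => {y : Seq S | ∀ k : Finset.Icc a b, y k = w k})) ?_
  rintro _ ⟨x, rfl⟩
  refine ⟨r x, ?_⟩
  ext y
  simp [box, r]

lemma prod_Ico_int (a : ℤ) (m : ℕ) (f : ℤ → ℝ) :
    ∏ k ∈ Finset.Ico a (a + m), f k = ∏ l ∈ Finset.range m, f (a + (l : ℤ)) := by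
  symm
  refine Finset.prod_bij (fun l _ => a + (l : ℤ)) ?_ ?_ ?_ ?_
  · intro l hl; simp at hl ⊢; omega
  · intro l _ l' _ h; omega
  · intro k hk
    simp only [Finset.mem_Ico] at hk
    exact ⟨(k - a).toNat, by simp only [Finset.mem_range]; omega, by omega⟩
  · intros; rfl

lemma IsMarkovMeasure.measure_box {S : Type*} [Fintype S] [MeasurableSpace S]
    {A : S → S → Bool} {P : ℤ → S → S → ℝ} {π : ℤ → S → ℝ} {μ : Measure (Seq S)}
    (hμ : IsMarkovMeasure μ A P π) {a b : ℤ} (hab : a ≤ b) (x : Seq S) :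
    μ (box a b x) =
      ENNReal.ofReal (π a (x a) * ∏ k ∈ Finset.Ico a b, P k (x k) (x (k + 1))) := by
  obtain ⟨m, rfl⟩ : ∃ m : ℕ, b = a + m := ⟨(b - a).toNat, by omega⟩
  have h := hμ.cylinder (a - 1) m (fun i => x (a + ((i : ℕ) : ℤ)))
  rw [prod_Ico_int, Finset.prod_range]
  simp only [sub_add_cancel] at h
  have e : box a (a + m) x =
      {y | ∀ i : Fin (m + 1), y (a + ((i : ℕ) : ℤ)) = x (a + ((i : ℕ) : ℤ))} := by
    ext y
    refine ⟨fun hy i => hy _ (by omega) (by have := i.2; omega), fun hy k h1 h2 => ?_⟩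
    have := hy ⟨(k - a).toNat, by omega⟩
    simpa [Int.toNat_of_nonneg (sub_nonneg.2 h1)] using this
  rw [e, h]
  simp [add_assoc]

/-- Two measures that give the same finite mass to all sufficiently large symmetric boxes
coincide, because these boxes form a π-system generating the product σ-algebra. -/
lemma ext_of_box {S : Type*} [Fintype S] [MeasurableSpace S] [MeasurableSingletonClass S]
    (ρ σ : Measure (Seq S)) [IsFiniteMeasure ρ] (N : ℕ)
    (h : ∀ n : ℕ, N ≤ n → ∀ x : Seq S, ρ (box (-n) n x) = σ (box (-n) n x)) : ρ = σ := by
  let C : Set (Set (Seq S)) := {s | ∃ n : ℕ, N ≤ n ∧ ∃ x : Seq S, s = box (-n) n x}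
  have hgen : (inferInstance : MeasurableSpace (Seq S)) = MeasurableSpace.generateFrom C := by
    apply le_antisymm
    · refine iSup_le fun k => ?_
      rintro _ ⟨t, -, rfl⟩
      set n : ℕ := max N k.natAbs with hn
      have e : (fun y : Seq S => y k) ⁻¹' t = ⋃₀ ((box (-(n : ℤ)) n) '' {x : Seq S | x k ∈ t}) := by
        ext y
        simp only [Set.mem_preimage, Set.mem_sUnion, Set.mem_image, Set.mem_ofPred_eq,
          exists_exists_and_eq_and]
        refine ⟨fun hy => ⟨y, hy, fun _ _ _ => rfl⟩, ?_⟩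
        rintro ⟨x, hx, hy⟩
        rwa [hy k (by omega) (by omega)]
      rw [e]
      refine MeasurableSet.sUnion
        (((finite_range_box _ _).subset (Set.image_subset_range _ _)).countable) ?_
      rintro _ ⟨x, -, rfl⟩
      exact MeasurableSpace.measurableSet_generateFrom ⟨n, le_max_left _ _, x, rfl⟩
    · refine MeasurableSpace.generateFrom_le ?_
      rintro _ ⟨n, -, x, rfl⟩
      exact measurableSet_box _ _ _
  have hpi : IsPiSystem C := by
    rintro _ ⟨n, hn, x, rfl⟩ _ ⟨m, hm, y, rfl⟩ ⟨z, hz1, hz2⟩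
    rw [box_eq_of_mem hz1, box_eq_of_mem hz2]
    refine ⟨max n m, hn.trans (le_max_left _ _), z, ?_⟩
    ext w
    constructor
    · rintro ⟨h1, h2⟩ k hk1 hk2
      rcases le_total n m with hnm | hnm
      · exact h2 k (by omega) (by omega)
      · exact h1 k (by omega) (by omega)
    · intro hw
      exact ⟨fun k h1 h2 => hw k (by omega) (by omega), fun k h1 h2 => hw k (by omega) (by omega)⟩
  refine Measure.ext_of_generateFrom_of_cover_subset hgen hpi
    (T := Set.range (box (-(N : ℤ)) N)) ?_ (finite_range_box _ _).countable ?_ ?_ ?_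
  · rintro _ ⟨x, rfl⟩; exact ⟨N, le_rfl, x, rfl⟩
  · refine Set.eq_univ_of_forall fun y => ⟨_, ⟨y, rfl⟩, fun _ _ _ => rfl⟩
  · intro s _; exact measure_ne_top _ _
  · rintro _ ⟨n, hn, x, rfl⟩; exact h n hn x

/-- If `∫_{box a b x} f = 0` for all `x`, then `f` is orthogonal to every function of the
coordinates in `[a, b]`. -/
lemma integral_mul_eq_zero_of_box {S : Type*} [Fintype S] [MeasurableSpace S]
    [MeasurableSingletonClass S] (μ : Measure (Seq S)) (a b : ℤ) (φ f : Seq S → ℝ)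
    (hφ : ∀ x y, y ∈ box a b x → φ y = φ x) (hi : Integrable (fun y => φ y * f y) μ)
    (h : ∀ x, ∫ y in box a b x, f y ∂μ = 0) : ∫ y, φ y * f y ∂μ = 0 := by
  have hfin := finite_range_box (S := S) a b
  have e : (Set.univ : Set (Seq S)) = ⋃ s ∈ hfin.toFinset, s := by
    symm
    refine Set.eq_univ_of_forall fun y => ?_
    simp only [Set.mem_iUnion, Set.Finite.mem_toFinset]
    exact ⟨_, ⟨y, rfl⟩, fun _ _ _ => rfl⟩
  rw [← setIntegral_univ, e, integral_biUnion_finset]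
  · refine Finset.sum_eq_zero fun s hs => ?_
    obtain ⟨x, rfl⟩ := hfin.mem_toFinset.1 hs
    rw [setIntegral_congr_fun (g := fun y => φ x * f y) (measurableSet_box _ _ _)
      (fun y hy => by simp only [hφ x y hy]), integral_const_mul, h, mul_zero]
  · intro s hs
    obtain ⟨x, rfl⟩ := hfin.mem_toFinset.1 hs
    exact measurableSet_box _ _ _
  · intro s hs t ht hst
    obtain ⟨x, rfl⟩ := hfin.mem_toFinset.1 hs
    obtain ⟨y, rfl⟩ := hfin.mem_toFinset.1 ht
    refine Set.disjoint_left.2 fun z hz1 hz2 => hst ?_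
    rw [box_eq_of_mem hz1, box_eq_of_mem hz2]
  · intro s _; exact hi.integrableOn

/-! ### Asymptotic constancy of the transition matrices -/

open scoped Classical in
/-- The martingale difference `1[y_k = s] (1[y_{k+1} = t] - P_k(s,t))`. -/
noncomputable def mdiff {S : Type*} (P : ℤ → S → S → ℝ) (s t : S) (k : ℤ) (y : Seq S) : ℝ :=
  (if y k = s then 1 else 0) * ((if y (k + 1) = t then 1 else 0) - P k s t)

section
variable {S : Type*} [Fintype S] [MeasurableSpace S]
    {A : S → S → Bool} {P : ℤ → S → S → ℝ} {π : ℤ → S → ℝ} {μ : Measure (Seq S)}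

lemma IsMarkovMeasure.P_le_one (hμ : IsMarkovMeasure μ A P π) (n : ℤ) (s t : S) :
    P n s t ≤ 1 := by
  rw [← (hμ.stochastic n).2 s]
  exact Finset.single_le_sum (f := fun t => P n s t)
    (fun t _ => (hμ.stochastic n).1 s t) (Finset.mem_univ t)

lemma abs_mdiff_le (hμ : IsMarkovMeasure μ A P π) (s t : S) (k : ℤ) (y : Seq S) :
    |mdiff P s t k y| ≤ 1 := by
  have h1 := hμ.P_le_one k s t
  have h0 := (hμ.stochastic k).1 s t
  unfold mdiff
  split_ifs <;> simp <;> rw [abs_le] <;> constructor <;> linarith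

/-- Primitivity and the Doeblin condition bound all one-dimensional marginals from below. -/
lemma exists_dist_lower_bound (hA : IsPrimitive A) (hμ : IsMarkovMeasure μ A P π)
    (hD : Doeblin A P) : ∃ c > 0, ∀ (n : ℤ) (t : S), c ≤ π n t := by
  obtain ⟨δ, hδ, hP⟩ := hD
  obtain ⟨M, -, hM⟩ := hA
  have step : ∀ (n : ℤ) (s t : S), A s t = true → π n s * δ ≤ π (n + 1) t := by
    intro n s t hst
    rw [← hμ.consistent n t]
    refine (mul_le_mul_of_nonneg_left ((hP n s t).2 hst) (hμ.dist_nonneg n s)).trans ?_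
    exact Finset.single_le_sum (f := fun s => π n s * P n s t)
      (fun s _ => mul_nonneg (hμ.dist_nonneg n s) ((hμ.stochastic n).1 s t)) (Finset.mem_univ s)
  have path : ∀ (n : ℤ) (u : ℕ → S) (m : ℕ), (∀ i < m, A (u i) (u (i + 1)) = true) →
      π n (u 0) * δ ^ m ≤ π (n + m) (u m) := by
    intro n u m
    induction m with
    | zero => simp
    | succ m ih =>
      intro hu
      have h1 := ih fun i hi => hu i (by omega)
      have h2 := step (n + m) _ _ (hu m (by omega))
      rw [pow_succ, ← mul_assoc]
      push_cast
      rw [← add_assoc]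
      exact (mul_le_mul_of_nonneg_right h1 hδ.le).trans h2
  have key : ∀ (n : ℤ) (t : S), δ ^ M ≤ Fintype.card S * π n t := by
    intro n t
    have h1 : ∀ s, π (n - M) s * δ ^ M ≤ π n t := by
      intro s
      obtain ⟨u, h0, h1, h2⟩ := hM s t
      have := path (n - M) u M h2
      rwa [h0, h1, sub_add_cancel] at this
    have h2 := Finset.sum_le_sum fun s (_ : s ∈ Finset.univ) => h1 s
    rw [← Finset.sum_mul, hμ.dist_sum, one_mul] at h2
    simpa using h2
  refine ⟨δ ^ M / (Fintype.card S + 1), by positivity, fun n t => ?_⟩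
  rw [div_le_iff₀ (by positivity)]
  nlinarith [key n t, hμ.dist_nonneg n t]

variable [MeasurableSingletonClass S]

lemma measurable_mdiff (P : ℤ → S → S → ℝ) (s t : S) (k : ℤ) : Measurable (mdiff P s t k) := by
  have h : ∀ (l : ℤ) (u : S), MeasurableSet {y : Seq S | y l = u} := measurableSet_coord
  unfold mdiff
  exact (Measurable.ite (h _ _) measurable_const measurable_const).mul
    ((Measurable.ite (h _ _) measurable_const measurable_const).sub measurable_const)

lemma integral_mdiff_eq (ρ : Measure (Seq S)) [IsFiniteMeasure ρ] (s t : S) (k : ℤ) :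
    ∫ y, mdiff P s t k y ∂ρ =
      ρ.real {y | y k = s ∧ y (k + 1) = t} - P k s t * ρ.real {y | y k = s} := by
  have h : ∀ (l : ℤ) (u : S), MeasurableSet {y : Seq S | y l = u} := measurableSet_coord
  have h2 : MeasurableSet {y : Seq S | y k = s ∧ y (k + 1) = t} := (h _ _).inter (h _ _)
  have e : mdiff P s t k = fun y => Set.indicator {y : Seq S | y k = s ∧ y (k + 1) = t} 1 y
      - P k s t * Set.indicator {y : Seq S | y k = s} 1 y := by
    ext y
    by_cases h1 : y k = s <;> by_cases h2 : y (k + 1) = t <;>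
      simp [mdiff, Set.indicator, h1, h2]
  rw [e, integral_sub, integral_const_mul, integral_indicator_one h2, integral_indicator_one (h _ _)]
  · exact (integrable_const (1 : ℝ)).indicator h2
  · exact ((integrable_const (1 : ℝ)).indicator (h _ _)).const_mul _

/-- The Markov property: the martingale difference at time `b` has zero mean given the past. -/
lemma setIntegral_mdiff (hμ : IsMarkovMeasure μ A P π) (s t : S) {a b : ℤ} (hab : a ≤ b)
    (x : Seq S) : ∫ y in box a b x, mdiff P s t b y ∂μ = 0 := by
  classical
  have := hμ.isProb
  have h : ∀ (l : ℤ) (u : S), MeasurableSet {y : Seq S | y l = u} := measurableSet_coord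
  have h2 : MeasurableSet {y : Seq S | y b = s ∧ y (b + 1) = t} := (h _ _).inter (h _ _)
  by_cases hx : x b = s
  · rw [integral_mdiff_eq, measureReal_restrict_apply h2, measureReal_restrict_apply (h _ _)]
    have e1 : {y : Seq S | y b = s} ∩ box a b x = box a b x :=
      Set.inter_eq_right.2 fun y hy => (hy b hab le_rfl).trans hx
    have e2 : {y : Seq S | y b = s ∧ y (b + 1) = t} ∩ box a b x
        = box a (b + 1) (Function.update x (b + 1) t) := by
      ext y
      constructor
      · rintro ⟨⟨-, h4⟩, h5⟩ k hk1 hk2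
        by_cases hk : k = b + 1
        · subst hk; simpa using h4
        · rw [Function.update_of_ne hk]; exact h5 k hk1 (by omega)
      · intro hy
        have h5 : y ∈ box a b x := fun k hk1 hk2 => by
          have := hy k hk1 (by omega)
          rwa [Function.update_of_ne (by omega)] at this
        refine ⟨⟨(h5 b hab le_rfl).trans hx, ?_⟩, h5⟩
        simpa using hy (b + 1) (by omega) le_rfl
    have hpos : ∀ z : Seq S, 0 ≤ π a (z a) * ∏ k ∈ Finset.Ico a b, P k (z k) (z (k + 1)) :=
      fun z => mul_nonneg (hμ.dist_nonneg _ _)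
        (Finset.prod_nonneg fun k _ => (hμ.stochastic k).1 _ _)
    rw [e1, e2, Measure.real, Measure.real, hμ.measure_box hab, hμ.measure_box (by omega),
      ← Finset.insert_Ico_right_eq_Ico_add_one hab, Finset.prod_insert (by simp),
      Function.update_self, Function.update_of_ne (by omega), Function.update_of_ne (by omega), hx]
    have e3 : ∏ k ∈ Finset.Ico a b, P k (Function.update x (b + 1) t k)
        (Function.update x (b + 1) t (k + 1)) = ∏ k ∈ Finset.Ico a b, P k (x k) (x (k + 1)) := by
      refine Finset.prod_congr rfl fun k hk => ?_
      rw [Finset.mem_Ico] at hk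
      rw [Function.update_of_ne (by omega), Function.update_of_ne (by omega)]
    rw [e3, mul_left_comm, ENNReal.toReal_ofReal (hpos x),
      ENNReal.toReal_ofReal (mul_nonneg ((hμ.stochastic b).1 _ _) (hpos x)), sub_self]
  · rw [setIntegral_congr_fun (g := fun _ => (0 : ℝ)) (measurableSet_box _ _ _)]
    · simp
    · intro y hy
      have : y b ≠ s := by rw [hy b hab le_rfl]; exact hx
      simp [mdiff, this]

lemma mdiff_orthogonal (hμ : IsMarkovMeasure μ A P π) (s t : S) (k l : ℤ) (hkl : k ≠ l) :
    ∫ y, mdiff P s t k y * mdiff P s t l y ∂μ = 0 := by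
  have := hμ.isProb
  wlog h : k < l generalizing k l
  · simp only [mul_comm (mdiff P s t k _)]
    exact this l k hkl.symm (by omega)
  refine integral_mul_eq_zero_of_box μ k l _ _ ?_ ?_ (setIntegral_mdiff hμ s t h.le)
  · intro x y hy
    rw [mdiff, mdiff, hy k le_rfl h.le, hy (k + 1) (by omega) (by omega)]
  · refine Integrable.of_bound ((measurable_mdiff P s t k).mul
      (measurable_mdiff P s t l)).aestronglyMeasurable 1 (ae_of_all _ fun y => ?_)
    rw [Real.norm_eq_abs, abs_mul]
    exact mul_le_one₀ (abs_mdiff_le hμ s t k y) (abs_nonneg _) (abs_mdiff_le hμ s t l y)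

/-- Nonsingularity of the shift forces consecutive transition matrices to become close: the
density of `μ ∘ T⁻¹` is tested against the orthogonal martingale differences. -/
lemma tendsto_P_succ_sub (hA : IsPrimitive A) (hμ : IsMarkovMeasure μ A P π)
    (hD : Doeblin A P) (hns : ShiftNonsingular μ) (s t : S) :
    Tendsto (fun k => P (k + 1) s t - P k s t) cofinite (𝓝 0) := by
  have := hμ.isProb
  obtain ⟨c, hc, hπ⟩ := exists_dist_lower_bound hA hμ hD
  set ν := Measure.map (shiftMap (S := S)) μ with hν
  have hTm : Measurable (shiftMap (S := S)) := measurable_shiftZ 1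
  have : IsProbabilityMeasure ν := Measure.isProbabilityMeasure_map hTm.aemeasurable
  have h1 := tendsto_integral_mul_of_orthogonal μ (mdiff P s t) (measurable_mdiff P s t)
    (abs_mdiff_le hμ s t) (mdiff_orthogonal hμ s t) (fun x => (ν.rnDeriv μ x).toReal)
    Measure.integrable_toReal_rnDeriv
  have h : ∀ (l : ℤ) (u : S), MeasurableSet {y : Seq S | y l = u} := measurableSet_coord
  have e : ∀ k, ∫ x, mdiff P s t k x * (ν.rnDeriv μ x).toReal ∂μ
      = π (k + 1) s * (P (k + 1) s t - P k s t) := by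
    intro k
    have e1 : ∫ x, mdiff P s t k x * (ν.rnDeriv μ x).toReal ∂μ = ∫ x, mdiff P s t k x ∂ν := by
      rw [← integral_rnDeriv_smul hns.1]
      simp only [smul_eq_mul, mul_comm]
      rfl
    have m1 : ν.real {y | y k = s} = π (k + 1) s := by
      rw [Measure.real, hν, Measure.map_apply hTm (h _ _)]
      have : shiftMap ⁻¹' {y : Seq S | y k = s} = box (k + 1) (k + 1) (fun _ => s) := by
        ext y
        refine ⟨fun hy l h1 h2 => ?_, fun hy => hy (k + 1) le_rfl le_rfl⟩
        obtain rfl : l = k + 1 := le_antisymm h2 h1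
        exact hy
      rw [this, hμ.measure_box le_rfl]
      simp [hμ.dist_nonneg]
    have m2 : ν.real {y | y k = s ∧ y (k + 1) = t} = π (k + 1) s * P (k + 1) s t := by
      classical
      have hset : MeasurableSet {y : Seq S | y k = s ∧ y (k + 1) = t} := (h _ _).inter (h _ _)
      rw [Measure.real, hν, Measure.map_apply hTm hset]
      have : shiftMap ⁻¹' {y : Seq S | y k = s ∧ y (k + 1) = t}
          = box (k + 1) (k + 1 + 1) (fun l => if l = k + 1 then s else t) := by
        ext y
        constructor
        · rintro ⟨hy1, hy2⟩ l h1 h2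
          rcases (by omega : l = k + 1 ∨ l = k + 1 + 1) with rfl | rfl
          · simpa [shiftMap, shiftZ] using hy1
          · simpa [shiftMap, shiftZ] using hy2
        · intro hy
          exact ⟨by simpa [shiftMap, shiftZ] using hy (k + 1) le_rfl (by omega),
            by simpa [shiftMap, shiftZ] using hy (k + 1 + 1) (by omega) le_rfl⟩
      rw [this, hμ.measure_box (by omega), ← Finset.insert_Ico_right_eq_Ico_add_one le_rfl]
      simp only [Finset.Ico_self, insert_empty_eq, Finset.prod_singleton, if_true]
      rw [if_neg (by omega), ENNReal.toReal_ofReal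
        (mul_nonneg (hμ.dist_nonneg _ _) ((hμ.stochastic _).1 _ _))]
    rw [e1, integral_mdiff_eq, m1, m2]
    ring
  simp only [e] at h1
  refine squeeze_zero_norm (a := fun k => c⁻¹ * |π (k + 1) s * (P (k + 1) s t - P k s t)|)
    (fun k => ?_) ?_
  · rw [Real.norm_eq_abs, abs_mul, abs_of_nonneg (hμ.dist_nonneg (k + 1) s), ← mul_assoc]
    refine le_mul_of_one_le_left (abs_nonneg _) ?_
    rw [inv_mul_eq_div, one_le_div hc]
    exact hπ _ _
  · simpa using h1.abs.const_mul c⁻¹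

lemma tendsto_P_ratio (hA : IsPrimitive A) (hμ : IsMarkovMeasure μ A P π)
    (hD : Doeblin A P) (hns : ShiftNonsingular μ) {s t : S} (hst : A s t = true) (a b : ℤ) :
    Tendsto (fun n : ℤ => P (a - n) s t / P (b - n) s t) cofinite (𝓝 1) := by
  have h1 := tendsto_P_succ_sub hA hμ hD hns s t
  have h2 : ∀ d : ℕ, Tendsto (fun k => P (k + d) s t - P k s t) cofinite (𝓝 0) := by
    intro d
    induction d with
    | zero => simp
    | succ d ih =>
      have h3 := h1.comp (add_left_injective (d : ℤ)).tendsto_cofinite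
      have h4 := h3.add ih
      rw [add_zero] at h4
      refine h4.congr fun k => ?_
      simp [add_assoc]
  obtain ⟨δ, hδ, hP⟩ := hD
  have inj : ∀ b : ℤ, Function.Injective (fun n : ℤ => b - n) := fun b => sub_right_injective
  have hpos : ∀ k, δ ≤ P k s t := fun k => (hP k s t).2 hst
  have h3 : Tendsto (fun n : ℤ => P (a - n) s t - P (b - n) s t) cofinite (𝓝 0) := by
    rcases le_total a b with hab | hab
    · have := ((h2 (b - a).toNat).comp (inj a).tendsto_cofinite).neg
      rw [neg_zero] at this
      refine this.congr fun n => ?_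
      simp only [Function.comp, neg_sub]
      congr 2; omega
    · have := (h2 (a - b).toNat).comp (inj b).tendsto_cofinite
      refine this.congr fun n => ?_
      simp only [Function.comp]
      congr 2; omega
  have h4 : Tendsto (fun n : ℤ => P (a - n) s t / P (b - n) s t - 1) cofinite (𝓝 0) := by
    refine squeeze_zero_norm (a := fun n => δ⁻¹ * |P (a - n) s t - P (b - n) s t|) (fun n => ?_) ?_
    · have hp := hpos (b - n)
      have hp0 : 0 < P (b - n) s t := hδ.trans_le hp
      rw [div_sub_one hp0.ne', Real.norm_eq_abs, abs_div, abs_of_pos hp0, div_eq_inv_mul]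
      gcongr
    · simpa using h3.abs.const_mul δ⁻¹
  simpa using h4.add_const 1
end

/-! ### Block exchanges -/

section
variable {S : Type*} {B B' : ℕ → S} {L : ℕ} {i j : ℤ}

lemma swapBlocks_left (x : Seq S) {l : ℕ} (hl : l < L) :
    swapBlocks B B' L i j x (i + l) = B' l := by
  rw [swapBlocks, if_pos (by omega)]
  congr 1; omega

lemma swapBlocks_right (hij : (L : ℤ) ≤ |i - j|) (x : Seq S) {l : ℕ} (hl : l < L) :
    swapBlocks B B' L i j x (j + l) = B l := by
  have : ¬ (i ≤ j + (l : ℤ) ∧ j + (l : ℤ) < i + L) := by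
    rcases abs_cases (i - j) with h | h <;> omega
  rw [swapBlocks, if_neg this, if_pos (by omega)]
  congr 1; omega

lemma swapBlocks_other (x : Seq S) {k : ℤ} (h1 : ¬ (i ≤ k ∧ k < i + L))
    (h2 : ¬ (j ≤ k ∧ k < j + L)) : swapBlocks B B' L i j x k = x k := by
  rw [swapBlocks, if_neg h1, if_neg h2]

/-- The set `B(i) ∩ B'(j)`, the domain of the asymmetric permutation. -/
def dom (B B' : ℕ → S) (L : ℕ) (i j : ℤ) : Set (Seq S) := cylOf B L i ∩ cylOf B' L j

lemma swapBlocks_mem (hij : (L : ℤ) ≤ |i - j|) (x : Seq S) :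
    swapBlocks B B' L i j x ∈ dom B' B L i j :=
  ⟨fun _ hl => swapBlocks_left x hl, fun _ hl => swapBlocks_right hij x hl⟩

lemma swapBlocks_swapBlocks (hij : (L : ℤ) ≤ |i - j|) {x : Seq S} (hx : x ∈ dom B B' L i j) :
    swapBlocks B' B L i j (swapBlocks B B' L i j x) = x := by
  ext k
  by_cases h1 : i ≤ k ∧ k < i + L
  · obtain ⟨l, rfl⟩ : ∃ l : ℕ, k = i + l := ⟨(k - i).toNat, by omega⟩
    rw [swapBlocks_left _ (by omega), hx.1 l (by omega)]
  · by_cases h2 : j ≤ k ∧ k < j + L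
    · obtain ⟨l, rfl⟩ : ∃ l : ℕ, k = j + l := ⟨(k - j).toNat, by omega⟩
      rw [swapBlocks_right hij _ (by omega), hx.2 l (by omega)]
    · rw [swapBlocks_other _ h1 h2, swapBlocks_other _ h1 h2]

lemma dom_disjoint (hne : ∃ l < L, B l ≠ B' l) {x : Seq S} (hx : x ∈ dom B B' L i j) :
    x ∉ dom B' B L i j := by
  obtain ⟨l, hl, h⟩ := hne
  intro hx'
  exact h ((hx.1 l hl).symm.trans (hx'.1 l hl))

lemma symSwap_of_mem {x : Seq S} (hx : x ∈ dom B B' L i j) :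
    symSwap B B' L i j x = swapBlocks B B' L i j x := if_pos hx

lemma symSwap_comm (hne : ∃ l < L, B l ≠ B' l) :
    symSwap B B' L i j = symSwap B' B L i j := by
  ext1 x
  unfold symSwap
  by_cases h1 : x ∈ dom B B' L i j
  · have h2 := dom_disjoint hne h1
    rw [dom] at h1 h2
    rw [if_pos h1, if_neg h2, if_pos h1]
  · rw [dom] at h1
    rw [if_neg h1, if_neg h1]

lemma symSwap_of_mem' (hne : ∃ l < L, B l ≠ B' l) {x : Seq S} (hx : x ∈ dom B' B L i j) :
    symSwap B B' L i j x = swapBlocks B' B L i j x := by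
  rw [symSwap_comm hne, symSwap_of_mem hx]

lemma symSwap_of_not_mem {x : Seq S} (h1 : x ∉ dom B B' L i j) (h2 : x ∉ dom B' B L i j) :
    symSwap B B' L i j x = x := by
  rw [dom] at h1 h2
  rw [symSwap, if_neg h1, if_neg h2]

lemma symSwap_symSwap (hij : (L : ℤ) ≤ |i - j|) (hne : ∃ l < L, B l ≠ B' l) (x : Seq S) :
    symSwap B B' L i j (symSwap B B' L i j x) = x := by
  by_cases h1 : x ∈ dom B B' L i j
  · rw [symSwap_of_mem h1, symSwap_of_mem' hne (swapBlocks_mem hij x), swapBlocks_swapBlocks hij h1]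
  by_cases h2 : x ∈ dom B' B L i j
  · rw [symSwap_of_mem' hne h2, symSwap_of_mem (swapBlocks_mem hij x), swapBlocks_swapBlocks hij h2]
  · rw [symSwap_of_not_mem h1 h2, symSwap_of_not_mem h1 h2]

lemma mem_dom_of_mem_box {N : ℕ} (hi : -(N : ℤ) ≤ i ∧ i + L ≤ N) (hj : -(N : ℤ) ≤ j ∧ j + L ≤ N)
    {x y : Seq S} (hy : y ∈ box (-N) N x) (hx : x ∈ dom B B' L i j) : y ∈ dom B B' L i j :=
  ⟨fun l hl => (hy _ (by omega) (by omega)).trans (hx.1 l hl),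
    fun l hl => (hy _ (by omega) (by omega)).trans (hx.2 l hl)⟩

lemma box_symm {a b : ℤ} {x y : Seq S} (hy : y ∈ box a b x) : x ∈ box a b y :=
  fun k h1 h2 => (hy k h1 h2).symm

lemma swapBlocks_mem_box {a b : ℤ} {x y : Seq S} (hy : y ∈ box a b x) :
    swapBlocks B B' L i j y ∈ box a b (swapBlocks B B' L i j x) := by
  intro k h1 h2
  simp only [swapBlocks]
  rw [hy k h1 h2]

lemma symSwap_mem_box {N : ℕ} (hi : -(N : ℤ) ≤ i ∧ i + L ≤ N) (hj : -(N : ℤ) ≤ j ∧ j + L ≤ N)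
    (hne : ∃ l < L, B l ≠ B' l) {x y : Seq S} (hy : y ∈ box (-N) N x) :
    symSwap B B' L i j y ∈ box (-N) N (symSwap B B' L i j x) := by
  by_cases h1 : x ∈ dom B B' L i j
  · rw [symSwap_of_mem h1, symSwap_of_mem (mem_dom_of_mem_box hi hj hy h1)]
    exact swapBlocks_mem_box hy
  by_cases h2 : x ∈ dom B' B L i j
  · rw [symSwap_of_mem' hne h2, symSwap_of_mem' hne (mem_dom_of_mem_box hi hj hy h2)]
    exact swapBlocks_mem_box hy
  · rwa [symSwap_of_not_mem h1 h2, symSwap_of_not_mem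
      (fun h => h1 (mem_dom_of_mem_box hi hj (box_symm hy) h))
      (fun h => h2 (mem_dom_of_mem_box hi hj (box_symm hy) h))]

variable [MeasurableSpace S] [MeasurableSingletonClass S]

lemma measurableSet_dom (B B' : ℕ → S) (L : ℕ) (i j : ℤ) : MeasurableSet (dom B B' L i j) := by
  have h : ∀ (B : ℕ → S) (i : ℤ), MeasurableSet (cylOf B L i) := by
    intro B i
    have : cylOf B L i = ⋂ l : ℕ, ⋂ (_ : l < L), {y : Seq S | y (i + (l : ℤ)) = B l} := by
      ext y; simp [cylOf]
    rw [this]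
    exact MeasurableSet.iInter fun l => MeasurableSet.iInter fun _ => measurableSet_coord _ _
  exact (h _ _).inter (h _ _)

lemma measurable_swapBlocks (B B' : ℕ → S) (L : ℕ) (i j : ℤ) :
    Measurable (swapBlocks B B' L i j) := by
  refine measurable_pi_iff.2 fun k => ?_
  unfold swapBlocks
  split_ifs
  · exact measurable_const
  · exact measurable_const
  · exact measurable_pi_apply k

lemma measurable_symSwap (B B' : ℕ → S) (L : ℕ) (i j : ℤ) :
    Measurable (symSwap B B' L i j) := by
  unfold symSwap
  exact Measurable.ite (measurableSet_dom B B' L i j) (measurable_swapBlocks _ _ _ _ _)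
    (Measurable.ite (measurableSet_dom B' B L i j) (measurable_swapBlocks _ _ _ _ _) measurable_id)
end

/-! ### The Radon–Nikodym derivative of a block exchange -/

/-- The factor by which `V : B(i) ⇌ B'(j)` distorts the measure `μ ∘ Tⁿ`. -/
noncomputable def distortion {S : Type*} (P : ℤ → S → S → ℝ) (B B' : ℕ → S) (L : ℕ) (i j n : ℤ) :
    ℝ :=
  ∏ l ∈ Finset.range (L - 1),
    (P (i + l - n) (B' l) (B' (l + 1)) / P (j + l - n) (B' l) (B' (l + 1)) *
      (P (j + l - n) (B l) (B (l + 1)) / P (i + l - n) (B l) (B (l + 1))))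

/-- Exchanging the blocks alters only the edges inside the two blocks, since the blocks have the
same first and the same last symbol. -/
lemma prod_swapBlocks {S : Type*} {A : S → S → Bool} {P : ℤ → S → S → ℝ} (hD : Doeblin A P)
    {B B' : ℕ → S} {L : ℕ} {i j : ℤ} (hL : 1 ≤ L)
    (hBadm : ∀ l : ℕ, l + 1 < L → A (B l) (B (l + 1)) = true)
    (hB'adm : ∀ l : ℕ, l + 1 < L → A (B' l) (B' (l + 1)) = true)
    (hfirst : B 0 = B' 0) (hlast : B (L - 1) = B' (L - 1))
    (hij : (L : ℤ) ≤ |i - j|) (n : ℤ) {N : ℕ}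
    (hi : -(N : ℤ) ≤ i ∧ i + L ≤ N) (hj : -(N : ℤ) ≤ j ∧ j + L ≤ N)
    {x : Seq S} (hx : x ∈ dom B B' L i j) :
    ∏ k ∈ Finset.Ico (-(N : ℤ)) N, P (k - n) (swapBlocks B B' L i j x k)
        (swapBlocks B B' L i j x (k + 1)) =
      distortion P B B' L i j n * ∏ k ∈ Finset.Ico (-(N : ℤ)) N, P (k - n) (x k) (x (k + 1)) := by
  obtain ⟨δ, hδ, hP⟩ := hD
  set x' := swapBlocks B B' L i j x with hx'
  have hx'm : x' ∈ dom B' B L i j := swapBlocks_mem hij x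
  -- the exchange moves only coordinates in the interior of the two blocks
  have same : ∀ k, ¬ (i < k ∧ k < i + L - 1) → ¬ (j < k ∧ k < j + L - 1) → x' k = x k := by
    intro k h1 h2
    by_cases h3 : i ≤ k ∧ k < i + L
    · rcases (by omega : k = i + (0 : ℕ) ∨ k = i + (L - 1 : ℕ)) with h | h
      · rw [h, hx'm.1 0 (by omega), hx.1 0 (by omega), hfirst]
      · rw [h, hx'm.1 _ (by omega), hx.1 _ (by omega), hlast]
    · by_cases h4 : j ≤ k ∧ k < j + L
      · rcases (by omega : k = j + (0 : ℕ) ∨ k = j + (L - 1 : ℕ)) with h | h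
        · rw [h, hx'm.2 0 (by omega), hx.2 0 (by omega), hfirst]
        · rw [h, hx'm.2 _ (by omega), hx.2 _ (by omega), hlast]
      · exact swapBlocks_other x h3 h4
  set I := Finset.Ico i (i + (L - 1 : ℕ)) with hI
  set J := Finset.Ico j (j + (L - 1 : ℕ)) with hJ
  have hdisj : Disjoint I J := by
    rw [Finset.disjoint_left]
    intro k h1 h2
    simp only [hI, hJ, Finset.mem_Ico] at h1 h2
    rcases abs_cases (i - j) with h | h <;> omega
  have hsub : I ∪ J ⊆ Finset.Ico (-(N : ℤ)) N := by
    intro k hk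
    simp only [hI, hJ, Finset.mem_union, Finset.mem_Ico] at hk ⊢
    omega
  have hoff : ∏ k ∈ Finset.Ico (-(N : ℤ)) N \ (I ∪ J), P (k - n) (x' k) (x' (k + 1)) =
      ∏ k ∈ Finset.Ico (-(N : ℤ)) N \ (I ∪ J), P (k - n) (x k) (x (k + 1)) := by
    refine Finset.prod_congr rfl fun k hk => ?_
    simp only [hI, hJ, Finset.mem_sdiff, Finset.mem_union, Finset.mem_Ico] at hk
    rw [same k (by omega) (by omega), same (k + 1) (by omega) (by omega)]
  have hblock : (∏ k ∈ I ∪ J, P (k - n) (x' k) (x' (k + 1))) = distortion P B B' L i j n *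
      ∏ k ∈ I ∪ J, P (k - n) (x k) (x (k + 1)) := by
    rw [Finset.prod_union hdisj, Finset.prod_union hdisj, hI, hJ]
    simp only [prod_Ico_int]
    rw [distortion, ← Finset.prod_mul_distrib, ← Finset.prod_mul_distrib,
      ← Finset.prod_mul_distrib]
    refine Finset.prod_congr rfl fun l hl => ?_
    have hl' : l + 1 < L := by have := Finset.mem_range.1 hl; omega
    have e : ∀ a : ℤ, a + (l : ℤ) + 1 = a + ((l + 1 : ℕ) : ℤ) := fun a => by push_cast; ring
    rw [e, e, hx'm.1 l (by omega), hx'm.1 _ hl', hx'm.2 l (by omega), hx'm.2 _ hl',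
      hx.1 l (by omega), hx.1 _ hl', hx.2 l (by omega), hx.2 _ hl']
    have h1 := (hδ.trans_le ((hP (j + l - n) _ _).2 (hB'adm l hl'))).ne'
    have h2 := (hδ.trans_le ((hP (i + l - n) _ _).2 (hBadm l hl'))).ne'
    field_simp
  rw [← Finset.prod_sdiff hsub, ← Finset.prod_sdiff hsub (f := fun k => P (k - n) (x k) (x (k + 1))),
    hoff, hblock]
  ring

section
variable {S : Type*} [Fintype S] [MeasurableSpace S] [MeasurableSingletonClass S]
    {A : S → S → Bool} {P : ℤ → S → S → ℝ} {π : ℤ → S → ℝ} {μ : Measure (Seq S)}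

lemma map_shift_box (hμ : IsMarkovMeasure μ A P π) (n : ℤ) (N : ℕ) (x : Seq S) :
    Measure.map (shiftZ (-n)) μ (box (-N) N x) = ENNReal.ofReal
      (π (-N - n) (x (-N)) * ∏ k ∈ Finset.Ico (-(N : ℤ)) N, P (k - n) (x k) (x (k + 1))) := by
  rw [Measure.map_apply (measurable_shiftZ _) (measurableSet_box _ _ _)]
  have e : shiftZ (-n) ⁻¹' (box (-N) N x) = box (-N - n) (N - n) (shiftZ n x) := by
    ext y
    constructor
    · intro hy k h1 h2
      have := hy (k + n) (by omega) (by omega)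
      simpa [shiftZ] using this
    · intro hy k h1 h2
      have := hy (k - n) (by omega) (by omega)
      simpa [shiftZ, sub_eq_add_neg] using this
  rw [e, hμ.measure_box (by omega)]
  have e2 : ∏ k ∈ Finset.Ico (-(N : ℤ) - n) (N - n), P k (shiftZ n x k) (shiftZ n x (k + 1)) =
      ∏ k ∈ Finset.Ico (-(N : ℤ)) N, P (k - n) (x k) (x (k + 1)) := by
    have e3 : (N : ℤ) - n = -N - n + (2 * N : ℕ) := by push_cast; ring
    have e4 : (N : ℤ) = -N + (2 * N : ℕ) := by push_cast; ring
    have h5 := prod_Ico_int (-N) (2 * N) (fun k => P (k - n) (x k) (x (k + 1)))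
    rw [← e4] at h5
    rw [h5, e3, prod_Ico_int]
    refine Finset.prod_congr rfl fun l _ => ?_
    have e5 : -(N : ℤ) - n + l = -N + l - n := by ring
    have e6 : -(N : ℤ) + l - n + 1 + n = -N + l + 1 := by ring
    simp only [shiftZ, e5, e6, sub_add_cancel]
  rw [e2]
  simp [shiftZ]

/-- On `B(i) ∩ B'(j)` the exchange multiplies `μ ∘ Tⁿ` by the constant `distortion`. -/
lemma restrict_map_symSwap (hμ : IsMarkovMeasure μ A P π) (hD : Doeblin A P)
    {B B' : ℕ → S} {L : ℕ} {i j : ℤ} (hL : 1 ≤ L)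
    (hBadm : ∀ l : ℕ, l + 1 < L → A (B l) (B (l + 1)) = true)
    (hB'adm : ∀ l : ℕ, l + 1 < L → A (B' l) (B' (l + 1)) = true)
    (hfirst : B 0 = B' 0) (hlast : B (L - 1) = B' (L - 1))
    (hne : ∃ l < L, B l ≠ B' l) (hij : (L : ℤ) ≤ |i - j|) (n : ℤ) :
    (Measure.map (fun y => symSwap B B' L i j (shiftZ (-n) y)) μ).restrict (dom B B' L i j) =
      ENNReal.ofReal (distortion P B B' L i j n) •
        (Measure.map (shiftZ (-n)) μ).restrict (dom B B' L i j) := by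
  have := hμ.isProb
  have hVm := measurable_symSwap B B' L i j
  have hTm := measurable_shiftZ (S := S) (-n)
  have hmap : Measure.map (fun y => symSwap B B' L i j (shiftZ (-n) y)) μ =
      Measure.map (symSwap B B' L i j) (Measure.map (shiftZ (-n)) μ) :=
    (Measure.map_map hVm hTm).symm
  rw [hmap]
  set ν := Measure.map (shiftZ (-n)) μ with hν
  have : IsProbabilityMeasure ν := Measure.isProbabilityMeasure_map hTm.aemeasurable
  have hd0 : 0 ≤ distortion P B B' L i j n :=
    Finset.prod_nonneg fun l _ => mul_nonneg
      (div_nonneg ((hμ.stochastic _).1 _ _) ((hμ.stochastic _).1 _ _))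
      (div_nonneg ((hμ.stochastic _).1 _ _) ((hμ.stochastic _).1 _ _))
  -- boxes from this size on contain both blocks strictly to the right of their left end point
  refine ext_of_box _ _ (i.natAbs + j.natAbs + L + 1) fun N hN x => ?_
  have hi : -(N : ℤ) ≤ i ∧ i + L ≤ N := by omega
  have hj : -(N : ℤ) ≤ j ∧ j + L ≤ N := by omega
  rw [Measure.restrict_apply (measurableSet_box _ _ _), Measure.smul_apply,
    Measure.restrict_apply (measurableSet_box _ _ _)]
  by_cases hx : x ∈ dom B B' L i j
  · have e1 : box (-(N : ℤ)) N x ∩ dom B B' L i j = box (-N) N x :=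
      Set.inter_eq_left.2 fun y hy => mem_dom_of_mem_box hi hj hy hx
    have e2 : symSwap B B' L i j ⁻¹' (box (-(N : ℤ)) N x) =
        box (-N) N (symSwap B B' L i j x) := by
      ext y
      constructor
      · intro hy
        have := symSwap_mem_box hi hj hne hy
        rwa [symSwap_symSwap hij hne] at this
      · intro hy
        have := symSwap_mem_box hi hj hne hy
        rwa [symSwap_symSwap hij hne] at this
    rw [e1, Measure.map_apply hVm (measurableSet_box _ _ _), e2, symSwap_of_mem hx, hν,
      map_shift_box hμ, map_shift_box hμ,
      prod_swapBlocks hD hL hBadm hB'adm hfirst hlast hij n hi hj hx,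
      swapBlocks_other x (by omega) (by omega), mul_left_comm, ENNReal.ofReal_mul hd0, smul_eq_mul]
  · have e1 : box (-(N : ℤ)) N x ∩ dom B B' L i j = ∅ := by
      refine Set.eq_empty_of_forall_notMem fun y hy => hx ?_
      exact mem_dom_of_mem_box hi hj (box_symm hy.1) hy.2
    rw [e1]; simp

/-- `μ ≪ μ ∘ Tⁿ` for every `n ∈ ℤ`. -/
lemma absolutelyContinuous_map_shiftZ (hns : ShiftNonsingular μ) (n : ℤ) :
    μ ≪ Measure.map (shiftZ n) μ := by
  have hcomp : ∀ a b : ℤ, Measure.map (shiftZ (S := S) a) (Measure.map (shiftZ b) μ) =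
      Measure.map (shiftZ (a + b)) μ := by
    intro a b
    rw [Measure.map_map (measurable_shiftZ a) (measurable_shiftZ b)]
    congr 1
    ext x k
    simp [shiftZ, add_assoc]
  have h0 : Measure.map (shiftZ (S := S) 0) μ = μ := by
    have : shiftZ (S := S) 0 = id := by ext x k; simp [shiftZ]
    rw [this, Measure.map_id]
  have h1 : μ ≪ Measure.map (shiftZ (S := S) 1) μ := hns.2
  have h2 : μ ≪ Measure.map (shiftZ (S := S) (-1)) μ := by
    have h : Measure.map (shiftZ (S := S) 1) μ ≪ μ := hns.1
    have := h.map (measurable_shiftZ (-1))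
    rwa [hcomp, neg_add_cancel, h0] at this
  induction n using Int.induction_on with
  | zero => rw [h0]
  | succ n ih =>
    have := h1.trans (ih.map (measurable_shiftZ 1))
    rwa [hcomp, add_comm] at this
  | pred n ih =>
    have := h2.trans (ih.map (measurable_shiftZ (-1)))
    rwa [hcomp, add_comm, ← sub_eq_add_neg] at this

/-- The asymmetric case: the ratio equals `distortion`, which tends to `1`. -/
lemma tendsto_ratio_on_dom (hA : IsPrimitive A) (hμ : IsMarkovMeasure μ A P π)
    (hD : Doeblin A P) (hns : ShiftNonsingular μ) {B B' : ℕ → S} {L : ℕ} {i j : ℤ} (hL : 1 ≤ L)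
    (hBadm : ∀ l : ℕ, l + 1 < L → A (B l) (B (l + 1)) = true)
    (hB'adm : ∀ l : ℕ, l + 1 < L → A (B' l) (B' (l + 1)) = true)
    (hfirst : B 0 = B' 0) (hlast : B (L - 1) = B' (L - 1))
    (hne : ∃ l < L, B l ≠ B' l) (hij : (L : ℤ) ≤ |i - j|) :
    ∀ᵐ x ∂μ, x ∈ dom B B' L i j →
        Tendsto (fun n : ℤ =>
            Measure.rnDeriv
                (Measure.map (fun y => symSwap B B' L i j (shiftZ (-n) y)) μ) μ x
              / Measure.rnDeriv (Measure.map (shiftZ (-n)) μ) μ x)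
          cofinite (𝓝 (1 : ENNReal)) := by
  have := hμ.isProb
  have hlim : Tendsto (fun n => ENNReal.ofReal (distortion P B B' L i j n)) cofinite (𝓝 1) := by
    have : Tendsto (fun n => distortion P B B' L i j n) cofinite (𝓝 1) := by
      unfold distortion
      rw [show (1 : ℝ) = ∏ l ∈ Finset.range (L - 1), 1 * 1 by simp]
      refine tendsto_finsetProd _ fun l hl => ?_
      have hl' : l + 1 < L := by have := Finset.mem_range.1 hl; omega
      exact (tendsto_P_ratio hA hμ hD hns (hB'adm l hl') _ _).mul
        (tendsto_P_ratio hA hμ hD hns (hBadm l hl') _ _)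
    simpa using ENNReal.tendsto_ofReal this
  have hdm := measurableSet_dom B B' L i j
  have hae : ∀ n : ℤ, ∀ᵐ x ∂μ, x ∈ dom B B' L i j →
      Measure.rnDeriv (Measure.map (fun y => symSwap B B' L i j (shiftZ (-n) y)) μ) μ x
        / Measure.rnDeriv (Measure.map (shiftZ (-n)) μ) μ x
        = ENNReal.ofReal (distortion P B B' L i j n) := by
    intro n
    have hVTm : Measurable (fun y => symSwap B B' L i j (shiftZ (-n) y)) :=
      (measurable_symSwap B B' L i j).comp (measurable_shiftZ _)
    have hr := restrict_map_symSwap hμ hD hL hBadm hB'adm hfirst hlast hne hij n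
    set ν := Measure.map (shiftZ (-n)) μ with hν
    set ρ := Measure.map (fun y => symSwap B B' L i j (shiftZ (-n) y)) μ with hρ
    have : IsProbabilityMeasure ν :=
      Measure.isProbabilityMeasure_map (measurable_shiftZ _).aemeasurable
    have : IsProbabilityMeasure ρ := Measure.isProbabilityMeasure_map hVTm.aemeasurable
    have h1 := Measure.rnDeriv_restrict ρ μ hdm
    have h2 := Measure.rnDeriv_restrict ν μ hdm
    have h3 := Measure.rnDeriv_smul_left_of_ne_top (ν.restrict (dom B B' L i j)) μ
      (r := ENNReal.ofReal (distortion P B B' L i j n)) ENNReal.ofReal_ne_top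
    rw [← hr] at h3
    filter_upwards [h1, h2, h3, Measure.rnDeriv_pos' (absolutelyContinuous_map_shiftZ hns (-n)),
      Measure.rnDeriv_lt_top ν μ] with x h1 h2 h3 h4 h5 hx
    rw [Set.indicator_of_mem hx] at h1 h2
    rw [← h1, h3, Pi.smul_apply, h2, smul_eq_mul, mul_div_assoc, ENNReal.div_self h4.ne' h5.ne,
      mul_one]
  filter_upwards [ae_all_iff.2 hae] with x hx hxd
  simp only [hx _ hxd]
  exact hlim
end

/-- **Admissible permutations lie in the renormalization pseudo full-group.**
For a topologically mixing Markov SFT with the Doeblin condition whose shift is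
nonsingular, every admissible permutation `V : B(i) ⇌ B'(j)` (equivalently, the
symmetric admissible permutation, which agrees with it on `B(i) ∩ B'(j)`)
satisfies: for μ-a.e. point `x` of its domain, the ratio
`(d(μ∘Tⁿ∘V)/dμ)(x) / (d(μ∘Tⁿ)/dμ)(x)` converges to `1` as `|n| → ∞`. -/
theorem admissible_permutation_renormalization
    {S : Type*} [Fintype S] [MeasurableSpace S] [MeasurableSingletonClass S]
    (A : S → S → Bool) (hA : IsPrimitive A)
    (P : ℤ → S → S → ℝ) (π : ℤ → S → ℝ) (μ : Measure (Seq S))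
    (hμ : IsMarkovMeasure μ A P π) (hD : Doeblin A P)
    (hns : ShiftNonsingular μ)
    (B B' : ℕ → S) (L : ℕ) (hL : 1 ≤ L)
    (hBadm : ∀ l : ℕ, l + 1 < L → A (B l) (B (l + 1)) = true)
    (hB'adm : ∀ l : ℕ, l + 1 < L → A (B' l) (B' (l + 1)) = true)
    (hfirst : B 0 = B' 0) (hlast : B (L - 1) = B' (L - 1))
    (hne : ∃ l < L, B l ≠ B' l)
    (i j : ℤ) (hij : (L : ℤ) ≤ |i - j|) :
    ∀ᵐ x ∂μ,
      x ∈ (cylOf B L i ∩ cylOf B' L j) ∪ (cylOf B' L i ∩ cylOf B L j) →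
        Tendsto (fun n : ℤ =>
            Measure.rnDeriv
                (Measure.map (fun y => symSwap B B' L i j (shiftZ (-n) y)) μ) μ x
              / Measure.rnDeriv (Measure.map (shiftZ (-n)) μ) μ x)
          cofinite (𝓝 (1 : ENNReal)) := by
  have h1 := tendsto_ratio_on_dom hA hμ hD hns (B := B) (B' := B') hL hBadm hB'adm hfirst hlast
    hne hij
  have hne' : ∃ l < L, B' l ≠ B l := hne.imp fun l hl => ⟨hl.1, hl.2.symm⟩
  have h2 := tendsto_ratio_on_dom hA hμ hD hns (B := B') (B' := B) hL hB'adm hBadm hfirst.symm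
    hlast.symm hne' hij
  rw [symSwap_comm hne'] at h2
  filter_upwards [h1, h2] with x h1 h2 hx
  exact hx.elim h1 h2

end MarkovSFT
end
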